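/- Let E be a finite quiver, R = P_k(Ē) and L = L_k(E). Then: (1) if N is a finite-dimensional left R-module with a composition series of length ℓ of which exactly r composition factors are isomorphic to modules in {coker(ν_i) : i ∈ E^0 not a sink}, then L ⊗_R N is a left L-module of finite length exactly ℓ − r; (2) every finitely presented left L-module M contains a finitely generated projective L-submodule P such that M/P has finite length; (3) every finitely presented left L-module of finite length is isomorphic to L ⊗_R N for some finite-dimensional left R-module N. -/

import Mathlib

namespace LPA

/-- A finite quiver: finite sets of vertices and arrows with source and target maps. -/
structure FinQuiver : Type 1 where
  V : Type
  A : Type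
  [fintypeV : Fintype V]
  [decEqV : DecidableEq V]
  [fintypeA : Fintype A]
  [decEqA : DecidableEq A]
  src : A → V
  tgt : A → V

attribute [instance] FinQuiver.fintypeV FinQuiver.decEqV FinQuiver.fintypeA FinQuiver.decEqA

/-- The inverse quiver: all arrows reversed. -/
def FinQuiver.rev (Q : FinQuiver) : FinQuiver where
  V := Q.V
  A := Q.A
  fintypeV := Q.fintypeV
  decEqV := Q.decEqV
  fintypeA := Q.fintypeA
  decEqA := Q.decEqA
  src := Q.tgt
  tgt := Q.src

/-- Generators of the path algebra: a trivial path `p v` for each vertex and an arrow `e` for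
each arrow. -/
inductive PathGen (Q : FinQuiver) : Type
  | vertex (v : Q.V) : PathGen Q
  | edge (e : Q.A) : PathGen Q

/-- Defining relations of the path algebra: the trivial paths are pairwise orthogonal
idempotents summing to `1`, and `p (src e) * e = e = e * p (tgt e)`. -/
inductive PathRel (k : Type) [CommRing k] (Q : FinQuiver) :
    FreeAlgebra k (PathGen Q) → FreeAlgebra k (PathGen Q) → Prop
  | vertex_mul_self (v : Q.V) :
      PathRel k Q (FreeAlgebra.ι k (PathGen.vertex v) * FreeAlgebra.ι k (PathGen.vertex v))
        (FreeAlgebra.ι k (PathGen.vertex v))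
  | vertex_mul_ne (v w : Q.V) (h : v ≠ w) :
      PathRel k Q (FreeAlgebra.ι k (PathGen.vertex v) * FreeAlgebra.ι k (PathGen.vertex w)) 0
  | sum_vertex :
      PathRel k Q (∑ v : Q.V, FreeAlgebra.ι k (PathGen.vertex v)) 1
  | src_mul (e : Q.A) :
      PathRel k Q
        (FreeAlgebra.ι k (PathGen.vertex (Q.src e)) * FreeAlgebra.ι k (PathGen.edge e))
        (FreeAlgebra.ι k (PathGen.edge e))
  | mul_tgt (e : Q.A) :
      PathRel k Q
        (FreeAlgebra.ι k (PathGen.edge e) * FreeAlgebra.ι k (PathGen.vertex (Q.tgt e)))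
        (FreeAlgebra.ι k (PathGen.edge e))

/-- The path algebra `P_k(Q)` of a finite quiver `Q`, presented by generators and relations. -/
def PathAlg (k : Type) [CommRing k] (Q : FinQuiver) : Type :=
  RingQuot (PathRel k Q)

variable (k : Type) [CommRing k] (Q : FinQuiver)

noncomputable instance : Ring (PathAlg k Q) :=
  inferInstanceAs (Ring (RingQuot (PathRel k Q)))

noncomputable instance : Algebra k (PathAlg k Q) :=
  inferInstanceAs (Algebra k (RingQuot (PathRel k Q)))

/-- The quotient map from the free algebra onto the path algebra. -/
noncomputable def PathAlg.mk : FreeAlgebra k (PathGen Q) →ₐ[k] PathAlg k Q :=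
  RingQuot.mkAlgHom k (PathRel k Q)

/-- The trivial path (vertex idempotent) `p v` in the path algebra. -/
noncomputable def PathAlg.p (v : Q.V) : PathAlg k Q :=
  PathAlg.mk k Q (FreeAlgebra.ι k (PathGen.vertex v))

/-- The arrow `e` in the path algebra. -/
noncomputable def PathAlg.arrow (e : Q.A) : PathAlg k Q :=
  PathAlg.mk k Q (FreeAlgebra.ι k (PathGen.edge e))

theorem PathAlg.mk_rel {x y : FreeAlgebra k (PathGen Q)} (h : PathRel k Q x y) :
    PathAlg.mk k Q x = PathAlg.mk k Q y :=
  RingQuot.mkAlgHom_rel k h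

theorem PathAlg.p_mul_self (v : Q.V) : PathAlg.p k Q v * PathAlg.p k Q v = PathAlg.p k Q v := by
  have h := PathAlg.mk_rel k Q (PathRel.vertex_mul_self v)
  simpa [map_mul, PathAlg.p] using h

theorem PathAlg.p_mul_ne (v w : Q.V) (hvw : v ≠ w) :
    PathAlg.p k Q v * PathAlg.p k Q w = 0 := by
  have h := PathAlg.mk_rel k Q (PathRel.vertex_mul_ne v w hvw)
  simpa [map_mul, PathAlg.p] using h

theorem PathAlg.sum_p : (∑ v : Q.V, PathAlg.p k Q v) = 1 := by
  have h := PathAlg.mk_rel k Q (PathRel.sum_vertex)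
  simpa [map_sum, PathAlg.p] using h

theorem PathAlg.arrow_mul_tgt (e : Q.A) :
    PathAlg.arrow k Q e * PathAlg.p k Q (Q.tgt e) = PathAlg.arrow k Q e := by
  have h := PathAlg.mk_rel k Q (PathRel.mul_tgt e)
  simpa [map_mul, PathAlg.p, PathAlg.arrow] using h

theorem PathAlg.src_mul_arrow (e : Q.A) :
    PathAlg.p k Q (Q.src e) * PathAlg.arrow k Q e = PathAlg.arrow k Q e := by
  have h := PathAlg.mk_rel k Q (PathRel.src_mul e)
  simpa [map_mul, PathAlg.p, PathAlg.arrow] using h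

/-- The set of vertices `{p v | v ∈ Q.V}` of the path algebra, as a finite set. -/
noncomputable def vertexFinset : Finset (PathAlg k Q) :=
  letI := Classical.decEq (PathAlg k Q)
  Finset.univ.image (PathAlg.p k Q)

end LPA

namespace LPA

/-- Generators of the Leavitt path algebra: vertex idempotents, arrows, and ghost arrows. -/
inductive LGen (Q : FinQuiver) : Type
  | vertex (v : Q.V) : LGen Q
  | edge (e : Q.A) : LGen Q
  | ghost (e : Q.A) : LGen Q

/-- Defining relations of the Leavitt path algebra `L_k(E)`: (V), (E1), (E2), (CK1), (CK2),
together with `∑ p_v = 1`. -/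
inductive LeavittRel (k : Type) [CommRing k] (Q : FinQuiver) :
    FreeAlgebra k (LGen Q) → FreeAlgebra k (LGen Q) → Prop
  | vertex_mul_self (v : Q.V) :
      LeavittRel k Q (FreeAlgebra.ι k (LGen.vertex v) * FreeAlgebra.ι k (LGen.vertex v))
        (FreeAlgebra.ι k (LGen.vertex v))
  | vertex_mul_ne (v w : Q.V) (h : v ≠ w) :
      LeavittRel k Q (FreeAlgebra.ι k (LGen.vertex v) * FreeAlgebra.ι k (LGen.vertex w)) 0
  | sum_vertex :
      LeavittRel k Q (∑ v : Q.V, FreeAlgebra.ι k (LGen.vertex v)) 1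
  | src_mul (e : Q.A) :
      LeavittRel k Q (FreeAlgebra.ι k (LGen.vertex (Q.src e)) * FreeAlgebra.ι k (LGen.edge e))
        (FreeAlgebra.ι k (LGen.edge e))
  | mul_tgt (e : Q.A) :
      LeavittRel k Q (FreeAlgebra.ι k (LGen.edge e) * FreeAlgebra.ι k (LGen.vertex (Q.tgt e)))
        (FreeAlgebra.ι k (LGen.edge e))
  | tgt_mul_ghost (e : Q.A) :
      LeavittRel k Q (FreeAlgebra.ι k (LGen.vertex (Q.tgt e)) * FreeAlgebra.ι k (LGen.ghost e))
        (FreeAlgebra.ι k (LGen.ghost e))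
  | ghost_mul_src (e : Q.A) :
      LeavittRel k Q (FreeAlgebra.ι k (LGen.ghost e) * FreeAlgebra.ι k (LGen.vertex (Q.src e)))
        (FreeAlgebra.ι k (LGen.ghost e))
  | ghost_mul_edge_self (e : Q.A) :
      LeavittRel k Q (FreeAlgebra.ι k (LGen.ghost e) * FreeAlgebra.ι k (LGen.edge e))
        (FreeAlgebra.ι k (LGen.vertex (Q.tgt e)))
  | ghost_mul_edge_ne (e f : Q.A) (h : e ≠ f) :
      LeavittRel k Q (FreeAlgebra.ι k (LGen.ghost e) * FreeAlgebra.ι k (LGen.edge f)) 0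
  | cuntz_krieger (v : Q.V) (h : ∃ e : Q.A, Q.src e = v) :
      LeavittRel k Q
        (∑ e ∈ Finset.univ.filter (fun e : Q.A => Q.src e = v),
          FreeAlgebra.ι k (LGen.edge e) * FreeAlgebra.ι k (LGen.ghost e))
        (FreeAlgebra.ι k (LGen.vertex v))

/-- The Leavitt path algebra `L_k(E)`. -/
def Leavitt (k : Type) [CommRing k] (Q : FinQuiver) : Type :=
  RingQuot (LeavittRel k Q)

variable (k : Type) [CommRing k] (Q : FinQuiver)

noncomputable instance : Ring (Leavitt k Q) :=
  inferInstanceAs (Ring (RingQuot (LeavittRel k Q)))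

noncomputable instance : Algebra k (Leavitt k Q) :=
  inferInstanceAs (Algebra k (RingQuot (LeavittRel k Q)))

/-- The quotient map from the free algebra onto the Leavitt path algebra. -/
noncomputable def Leavitt.mk : FreeAlgebra k (LGen Q) →ₐ[k] Leavitt k Q :=
  RingQuot.mkAlgHom k (LeavittRel k Q)

/-- The vertex idempotent `p v` in the Leavitt path algebra. -/
noncomputable def Leavitt.p (v : Q.V) : Leavitt k Q :=
  Leavitt.mk k Q (FreeAlgebra.ι k (LGen.vertex v))

/-- The arrow `e` in the Leavitt path algebra. -/
noncomputable def Leavitt.ed (e : Q.A) : Leavitt k Q :=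
  Leavitt.mk k Q (FreeAlgebra.ι k (LGen.edge e))

/-- The ghost arrow `ē` in the Leavitt path algebra. -/
noncomputable def Leavitt.gh (e : Q.A) : Leavitt k Q :=
  Leavitt.mk k Q (FreeAlgebra.ι k (LGen.ghost e))

theorem Leavitt.mk_rel {x y : FreeAlgebra k (LGen Q)} (h : LeavittRel k Q x y) :
    Leavitt.mk k Q x = Leavitt.mk k Q y :=
  RingQuot.mkAlgHom_rel k h

theorem Leavitt.p_mul_self (v : Q.V) : Leavitt.p k Q v * Leavitt.p k Q v = Leavitt.p k Q v := by
  have h := Leavitt.mk_rel k Q (LeavittRel.vertex_mul_self v)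
  simpa [map_mul, Leavitt.p] using h

theorem Leavitt.p_mul_ne (v w : Q.V) (hvw : v ≠ w) :
    Leavitt.p k Q v * Leavitt.p k Q w = 0 := by
  have h := Leavitt.mk_rel k Q (LeavittRel.vertex_mul_ne v w hvw)
  simpa [map_mul, Leavitt.p] using h

theorem Leavitt.sum_p : (∑ v : Q.V, Leavitt.p k Q v) = 1 := by
  have h := Leavitt.mk_rel k Q (LeavittRel.sum_vertex)
  simpa [map_sum, Leavitt.p] using h

theorem Leavitt.tgt_mul_gh (e : Q.A) :
    Leavitt.p k Q (Q.tgt e) * Leavitt.gh k Q e = Leavitt.gh k Q e := by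
  have h := Leavitt.mk_rel k Q (LeavittRel.tgt_mul_ghost e)
  simpa [map_mul, Leavitt.p, Leavitt.gh] using h

theorem Leavitt.gh_mul_src (e : Q.A) :
    Leavitt.gh k Q e * Leavitt.p k Q (Q.src e) = Leavitt.gh k Q e := by
  have h := Leavitt.mk_rel k Q (LeavittRel.ghost_mul_src e)
  simpa [map_mul, Leavitt.p, Leavitt.gh] using h

/-- The canonical embedding `P_k(Ē) → L_k(E)` of the path algebra of the inverse quiver into
the Leavitt path algebra, sending `p v ↦ p v` and each reversed arrow `ē ↦ ē`. -/
noncomputable def revToLeavitt : PathAlg k Q.rev →ₐ[k] Leavitt k Q :=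
  RingQuot.liftAlgHom k ⟨((FreeAlgebra.lift k fun g =>
    match g with
    | PathGen.vertex v => Leavitt.p k Q v
    | PathGen.edge e => Leavitt.gh k Q e : FreeAlgebra k (PathGen Q.rev) →ₐ[k] Leavitt k Q)), by
      intro x y h
      induction h with
      | vertex_mul_self v =>
          simp only [map_mul, FreeAlgebra.lift_ι_apply]
          exact Leavitt.p_mul_self k Q v
      | vertex_mul_ne v w h =>
          simp only [map_mul, map_zero, FreeAlgebra.lift_ι_apply]
          exact Leavitt.p_mul_ne k Q v w h
      | sum_vertex =>
          simp only [map_sum, map_one, FreeAlgebra.lift_ι_apply]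
          exact Leavitt.sum_p k Q
      | src_mul e =>
          simp only [map_mul, FreeAlgebra.lift_ι_apply]
          exact Leavitt.tgt_mul_gh k Q e
      | mul_tgt e =>
          simp only [map_mul, FreeAlgebra.lift_ι_apply]
          exact Leavitt.gh_mul_src k Q e⟩

/-- The canonical embedding `P_k(E) → L_k(E)` of the path algebra into the Leavitt path
algebra, sending `p v ↦ p v` and each arrow `e ↦ e`. -/
noncomputable def pathToLeavitt : PathAlg k Q →ₐ[k] Leavitt k Q :=
  RingQuot.liftAlgHom k ⟨((FreeAlgebra.lift k fun g =>
    match g with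
    | PathGen.vertex v => Leavitt.p k Q v
    | PathGen.edge e => Leavitt.ed k Q e : FreeAlgebra k (PathGen Q) →ₐ[k] Leavitt k Q)), by
      intro x y h
      induction h with
      | vertex_mul_self v =>
          simp only [map_mul, FreeAlgebra.lift_ι_apply]
          exact Leavitt.p_mul_self k Q v
      | vertex_mul_ne v w h =>
          simp only [map_mul, map_zero, FreeAlgebra.lift_ι_apply]
          exact Leavitt.p_mul_ne k Q v w h
      | sum_vertex =>
          simp only [map_sum, map_one, FreeAlgebra.lift_ι_apply]
          exact Leavitt.sum_p k Q
      | src_mul e =>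
          simp only [map_mul, FreeAlgebra.lift_ι_apply]
          have h := Leavitt.mk_rel k Q (LeavittRel.src_mul e)
          simpa [map_mul, Leavitt.p, Leavitt.ed] using h
      | mul_tgt e =>
          simp only [map_mul, FreeAlgebra.lift_ι_apply]
          have h := Leavitt.mk_rel k Q (LeavittRel.mul_tgt e)
          simpa [map_mul, Leavitt.p, Leavitt.ed] using h⟩

end LPA

namespace LPA

open TensorProduct

variable (P L : Type) [Ring P] [Ring L] (φ : P →+* L)

/-- The subgroup of relations defining the balanced tensor product `L ⊗_P M` (where `L` is a
right `P`-module via `φ` and `M` a left `P`-module) as a quotient of `L ⊗_ℤ M`. -/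
noncomputable def trel (M : Type) [AddCommGroup M] [Module P M] :
    Submodule L (TensorProduct ℤ L M) :=
  Submodule.span L
    {z | ∃ (l : L) (p : P) (m : M), z = (l * φ p) ⊗ₜ[ℤ] m - l ⊗ₜ[ℤ] (p • m)}

/-- The balanced tensor product `L ⊗_P M`, a left `L`-module. -/
abbrev TensorPhi (M : Type) [AddCommGroup M] [Module P M] : Type :=
  TensorProduct ℤ L M ⧸ trel P L φ M

/-- Functoriality of `L ⊗_P -` : the map induced on balanced tensor products by a `P`-linear
map `f : M → N`. -/
noncomputable def tmap {M N : Type} [AddCommGroup M] [Module P M] [AddCommGroup N]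
    [Module P N] (f : M →ₗ[P] N) : TensorPhi P L φ M →ₗ[L] TensorPhi P L φ N :=
  Submodule.mapQ _ _
    (TensorProduct.AlgebraTensorModule.map (LinearMap.id : L →ₗ[L] L)
      f.toAddMonoidHom.toIntLinearMap)
    (by
      refine Submodule.span_le.mpr ?_
      rintro z ⟨l, p, m, rfl⟩
      simp only [SetLike.mem_coe, Submodule.mem_comap, map_sub,
        TensorProduct.AlgebraTensorModule.map_tmul, LinearMap.id_coe, id_eq,
        AddMonoidHom.coe_toIntLinearMap, LinearMap.toAddMonoidHom_coe]
      exact Submodule.subset_span ⟨l, p, f m, by rw [f.map_smul]⟩)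

/-- `L` is flat as a right `P`-module (via `φ : P → L`): the functor `L ⊗_P -` preserves
injectivity. -/
def RightFlat : Prop :=
  ∀ (M N : Type) [AddCommGroup M] [Module P M] [AddCommGroup N] [Module P N],
    ∀ f : M →ₗ[P] N, Function.Injective f → Function.Injective (tmap P L φ f)

end LPA

namespace LPA

/-- Right multiplication by a fixed element, as an endomorphism of the left regular module. -/
noncomputable def rightMul (R : Type) [Ring R] (x : R) : R →ₗ[R] R where
  toFun y := y * x
  map_add' a b := add_mul a b x
  map_smul' r y := by simp [smul_eq_mul, mul_assoc]

variable (k : Type) [CommRing k] (Q : FinQuiver)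

/-- The principal left ideal `P_k(Ē)·p_v` of the path algebra of the inverse quiver. -/
noncomputable def pIdeal (v : Q.V) : Submodule (PathAlg k Q.rev) (PathAlg k Q.rev) :=
  LinearMap.range (rightMul (PathAlg k Q.rev) (PathAlg.p k Q.rev v))

/-- The principal left ideal `L_k(E)·p_v` of the Leavitt path algebra. -/
noncomputable def pIdealL (v : Q.V) : Submodule (Leavitt k Q) (Leavitt k Q) :=
  LinearMap.range (rightMul (Leavitt k Q) (Leavitt.p k Q v))

/-- A sink: a vertex emitting no arrows. -/
def IsSink (v : Q.V) : Prop := ∀ e : Q.A, Q.src e ≠ v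

/-- For a non-sink vertex `i` (and, degenerately, for a sink, where the domain is trivial),
the left `P_k(Ē)`-module homomorphism
`ν_i : ⊕_{e ∈ s⁻¹(i)} P_k(Ē)·p_{r(e)} → P_k(Ē)·p_i`, `(r_e) ↦ ∑ r_e·ē`. -/
noncomputable def nu (i : Q.V) :
    ((e : {e : Q.A // Q.src e = i}) → ↥(pIdeal k Q (Q.tgt e.1)))
      →ₗ[PathAlg k Q.rev] ↥(pIdeal k Q i) :=
  LinearMap.codRestrict (pIdeal k Q i)
    { toFun := fun x =>
        ∑ e : {e : Q.A // Q.src e = i}, ((x e : PathAlg k Q.rev) * PathAlg.arrow k Q.rev e.1)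
      map_add' := by
        intro a b
        simp [add_mul, Finset.sum_add_distrib]
      map_smul' := by
        intro r x
        simp [smul_eq_mul, Finset.mul_sum, mul_assoc] }
    (by
      intro x
      refine ⟨∑ e : {e : Q.A // Q.src e = i},
        ((x e : PathAlg k Q.rev) * PathAlg.arrow k Q.rev e.1), ?_⟩
      simp only [rightMul, LinearMap.coe_mk, AddHom.coe_mk, Finset.sum_mul]
      refine Finset.sum_congr rfl fun e _ => ?_
      obtain ⟨e, he⟩ := e
      subst he
      rw [mul_assoc]
      congr 1
      exact PathAlg.arrow_mul_tgt k Q.rev e)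

/-- The cokernel of `ν_i`, a finite-dimensional simple `P_k(Ē)`-module. -/
abbrev CokerNu (i : Q.V) : Type :=
  ↥(pIdeal k Q i) ⧸ LinearMap.range (nu k Q i)

/-- Reachability by a (possibly trivial) path in the quiver `E`. -/
inductive Reaches : Q.V → Q.V → Prop
  | refl (v : Q.V) : Reaches v v
  | step (e : Q.A) {w : Q.V} : Reaches (Q.tgt e) w → Reaches (Q.src e) w

end LPA

namespace LPA

/-- A composition series `0 = c 0 < c 1 < … < c ℓ = M` with simple factors. -/
def IsCompSeries {R M : Type} [Ring R] [AddCommGroup M] [Module R M] (ℓ : ℕ)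
    (c : Fin (ℓ + 1) → Submodule R M) : Prop :=
  c 0 = ⊥ ∧ c (Fin.last ℓ) = ⊤ ∧
    ∀ i : Fin ℓ, c i.castSucc < c i.succ ∧
      IsSimpleModule R
        (↥(c i.succ) ⧸ Submodule.comap (c i.succ).subtype (c i.castSucc))

/-- The `i`-th factor `c (i+1) / c i` of a series of submodules. -/
abbrev SeriesFactor {R M : Type} [Ring R] [AddCommGroup M] [Module R M] {ℓ : ℕ}
    (c : Fin (ℓ + 1) → Submodule R M) (i : Fin ℓ) : Type :=
  ↥(c i.succ) ⧸ Submodule.comap (c i.succ).subtype (c i.castSucc)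

end LPA

namespace LPA

/-- A module over a ring `R`, bundled with its structure. -/
structure ModuleOver (R : Type) [Ring R] : Type 1 where
  carrier : Type
  [acg : AddCommGroup carrier]
  [mod : Module R carrier]

attribute [instance] ModuleOver.acg ModuleOver.mod

/-- Finite-dimensionality over `k` of a bundled `R`-module, for a `k`-algebra `R` (the
`k`-structure being obtained by restriction of scalars). -/
def FinDimOver (k R : Type) [Field k] [Ring R] [Algebra k R] (X : ModuleOver R) : Prop :=
  letI : Module k X.carrier := Module.compHom X.carrier (algebraMap k R)
  FiniteDimensional k X.carrier

end LPA

/-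
Let `L = L_k(E)` and `R = P_k(Ē)`. The inverse `μ̄` of a path `μ` of `E` that ends at a sink or is
sufficiently long carries a given element of `L ⊗_R N` into the image of `N`, and `n ∈ N` dies in
`L ⊗_R N` if and only if `μ̄ n = 0` for all such `μ`: the germ at the boundary of `E` of the
function `μ ↦ μ̄ n` depends only on `1 ⊗ n`. Hence `L ⊗_R -` is exact. For `N` simple, `L ⊗_R N` is
simple or zero, and it vanishes exactly when `N` contains a nonzero vector supported at one non-sink
`v` and killed by all ghost arrows, that is, when `N ≅ coker ν_v`. Adding lengths along the series
gives (1).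

A finitely presented `L`-module descends to a finitely presented `R`-module `N`. Such an `N` is
presented by a finite-dimensional subspace `V` containing a set of generators, with relations of
path length at most one. Truncating the action of the ghost arrows by a projection onto `V` makes
`V` itself an `R`-module, and `N` is an extension of it by a direct sum `X` of modules `R p_v`,
which is projective. Base change along the flat `R → L` gives (2).

For (3), the inverse of a closed path of length `l` at `u` acts on germs of functions of the path
length as the shift by `l`, so subtracting `1` gives a difference operator, whose powers have
strictly growing kernels; this forces `L p_u` not to be Artinian. So if `L ⊗_R N` is Artinian, then
no cycle can be reached from the vertices `v` occurring in `X`, which is therefore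
finite-dimensional, and so is `N`.
-/

namespace LPA

open TensorProduct

section BaseChange

variable {P L : Type} [Ring P] [Ring L] {φ : P →+* L}
  {M N K : Type} [AddCommGroup M] [Module P M] [AddCommGroup N] [Module P N]
  [AddCommGroup K] [Module P K] {X : Type} [AddCommGroup X] [Module L X]

namespace TensorPhi

variable (φ M) in
/-- The canonical semilinear map `M → L ⊗_P M`, `m ↦ 1 ⊗ m`. -/
noncomputable def ι : M →ₛₗ[φ] TensorPhi P L φ M where
  toFun m := (trel P L φ M).mkQ ((1 : L) ⊗ₜ[ℤ] m)
  map_add' m n := by rw [TensorProduct.tmul_add, map_add]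
  map_smul' p m := by
    rw [← map_smul, TensorProduct.smul_tmul', smul_eq_mul, mul_one, ← one_mul (φ p), eq_comm,
      ← sub_eq_zero, ← map_sub]
    exact (Submodule.Quotient.mk_eq_zero _).mpr (Submodule.subset_span ⟨1, p, m, rfl⟩)

theorem mkQ_tmul (l : L) (m : M) : (trel P L φ M).mkQ (l ⊗ₜ[ℤ] m) = l • ι φ M m := by
  change _ = l • (trel P L φ M).mkQ ((1 : L) ⊗ₜ[ℤ] m)
  rw [← map_smul, TensorProduct.smul_tmul', smul_eq_mul, mul_one]

theorem span_range_ι : Submodule.span L (Set.range (ι φ M)) = ⊤ := by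
  rw [Submodule.eq_top_iff']
  intro x
  obtain ⟨y, rfl⟩ := Submodule.mkQ_surjective _ x
  induction y using TensorProduct.induction_on with
  | zero => rw [map_zero]; exact Submodule.zero_mem _
  | tmul l m =>
    rw [mkQ_tmul]
    exact Submodule.smul_mem _ _ (Submodule.subset_span ⟨m, rfl⟩)
  | add a b ha hb => rw [map_add]; exact Submodule.add_mem _ ha hb

theorem subsingleton_of_ι_eq_zero (h : ∀ m, ι φ M m = 0) : Subsingleton (TensorPhi P L φ M) := by
  rw [← Submodule.subsingleton_iff L, ← subsingleton_iff_bot_eq_top, ← span_range_ι, eq_comm,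
    Submodule.span_eq_bot]
  rintro _ ⟨m, rfl⟩
  exact h m

theorem hom_ext {f g : TensorPhi P L φ M →ₗ[L] X} (h : ∀ m, f (ι φ M m) = g (ι φ M m)) : f = g :=
  LinearMap.ext_on_range span_range_ι h

/-- The universal property of `L ⊗_P M`: semilinear maps out of `M` extend to it linearly. -/
noncomputable def lift (f : M →ₛₗ[φ] X) : TensorPhi P L φ M →ₗ[L] X :=
  (trel P L φ M).liftQ (TensorProduct.AlgebraTensorModule.lift
    (LinearMap.toSpanSingleton L (M →ₗ[ℤ] X) f.toAddMonoidHom.toIntLinearMap)) <| by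
      refine Submodule.span_le.mpr ?_
      rintro _ ⟨l, p, m, rfl⟩
      rw [SetLike.mem_coe, LinearMap.mem_ker, map_sub,
        TensorProduct.AlgebraTensorModule.lift_tmul, TensorProduct.AlgebraTensorModule.lift_tmul]
      change (l * φ p) • f m - l • f (p • m) = 0
      rw [map_smulₛₗ, mul_smul, sub_self]

@[simp]
theorem lift_ι (f : M →ₛₗ[φ] X) (m : M) : lift f (ι φ M m) = f m :=
  one_smul L (f m)

theorem range_lift (f : M →ₛₗ[φ] X) :
    LinearMap.range (lift f) = Submodule.span L (Set.range f) := by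
  rw [LinearMap.range_eq_map, ← span_range_ι, Submodule.map_span, ← Set.range_comp]
  exact congrArg _ (congrArg _ (funext (lift_ι f)))

@[simp]
theorem tmap_ι (f : M →ₗ[P] N) (m : M) : tmap P L φ f (ι φ M m) = ι φ N (f m) :=
  rfl

/-- Isomorphic modules have isomorphic base changes. -/
noncomputable def congr (e : M ≃ₗ[P] N) : TensorPhi P L φ M ≃ₗ[L] TensorPhi P L φ N :=
  LinearEquiv.ofLinearMap (tmap P L φ e.toLinearMap) (tmap P L φ e.symm.toLinearMap)
    (hom_ext fun n => by simp) (hom_ext fun m => by simp)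

theorem tmap_surjective {f : M →ₗ[P] N} (hf : Function.Surjective f) :
    Function.Surjective (tmap P L φ f) := by
  rw [← LinearMap.range_eq_top, eq_top_iff, ← span_range_ι, Submodule.span_le]
  rintro _ ⟨n, rfl⟩
  obtain ⟨m, rfl⟩ := hf n
  exact ⟨ι φ M m, rfl⟩

theorem tmap_exact {f : M →ₗ[P] N} {g : N →ₗ[P] K} (hfg : Function.Exact f g)
    (hg : Function.Surjective g) : Function.Exact (tmap P L φ f) (tmap P L φ g) := by
  refine LinearMap.exact_of_comp_eq_zero_of_ker_le_range (hom_ext fun m => ?_) fun x hx => ?_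
  · simp [hfg.apply_apply_eq_zero]
  · let q := (LinearMap.range (tmap P L φ f)).mkQ
    have hker : LinearMap.ker g ≤ LinearMap.ker (q.comp (ι φ N)) := fun n hn => by
      obtain ⟨m, rfl⟩ := (hfg n).mp hn
      exact (Submodule.Quotient.mk_eq_zero _).mpr ⟨ι φ M m, rfl⟩
    let s : TensorPhi P L φ K →ₗ[L] _ :=
      lift (((LinearMap.ker g).liftQ _ hker).comp (g.quotKerEquivOfSurjective hg).symm.toLinearMap)
    have hs : s ∘ₗ tmap P L φ g = q := hom_ext fun n => by
      have : (g.quotKerEquivOfSurjective hg).symm (g n) = (LinearMap.ker g).mkQ n := by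
        rw [LinearEquiv.symm_apply_eq]; rfl
      simp [s, this]
    rw [← Submodule.ker_mkQ (LinearMap.range (tmap P L φ f))]
    change q x = 0
    rw [← hs, LinearMap.comp_apply, LinearMap.mem_ker.mp hx, map_zero]

instance [Module.Finite P M] : Module.Finite L (TensorPhi P L φ M) := by
  obtain ⟨s, hs⟩ := Module.Finite.fg_top (R := P) (M := M)
  classical
  refine ⟨⟨s.image (ι φ M), eq_top_iff.mpr ?_⟩⟩
  rw [← span_range_ι, Submodule.span_le, Finset.coe_image]
  have h : (⊤ : Submodule P M) ≤ (Submodule.span L (ι φ M '' s)).comap (ι φ M) := by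
    rw [← hs, Submodule.span_le]
    exact fun m hm => Submodule.subset_span ⟨m, hm, rfl⟩
  rintro _ ⟨m, rfl⟩
  exact h trivial

instance [Module.Projective P M] : Module.Projective L (TensorPhi P L φ M) := by
  refine Module.Projective.of_lifting_property'' fun f hf => ?_
  let _ := Module.compHom (TensorPhi P L φ M →₀ L) φ
  let _ := Module.compHom (TensorPhi P L φ M) φ
  let f' : (TensorPhi P L φ M →₀ L) →ₗ[P] TensorPhi P L φ M :=
    { f with map_smul' := fun p x => f.map_smul (φ p) x }
  let i : M →ₗ[P] TensorPhi P L φ M := { ι φ M with map_smul' := (ι φ M).map_smulₛₗ }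
  obtain ⟨h, hh⟩ := Module.projective_lifting_property f' i hf
  let h' : M →ₛₗ[φ] (TensorPhi P L φ M →₀ L) := { h with map_smul' := h.map_smul }
  exact ⟨lift h', hom_ext fun m => by
    rw [LinearMap.comp_apply, lift_ι]
    exact LinearMap.congr_fun hh m⟩

end TensorPhi

end BaseChange

section Generators

variable {k : Type} [CommRing k] {Q : FinQuiver}

variable (k Q)

/-- `P_k(Ē)`, the path algebra of the inverse quiver. -/
abbrev GhostAlg : Type := PathAlg k Q.rev

/-- The inclusion `P_k(Ē) → L_k(E)` as a ring homomorphism, along which modules are extended. -/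
noncomputable abbrev ghostToLeavitt : GhostAlg k Q →+* Leavitt k Q := (revToLeavitt k Q).toRingHom

namespace GhostAlg

/-- The trivial path `p_v` in `P_k(Ē)`, indexed by the vertices of `E` rather than of `Ē`. -/
noncomputable def p (v : Q.V) : GhostAlg k Q := PathAlg.p k Q.rev v

/-- The ghost arrow `ē` in `P_k(Ē)`, indexed by the arrows of `E`. -/
noncomputable def gh (e : Q.A) : GhostAlg k Q := PathAlg.arrow k Q.rev e

theorem p_mul_p (v w : Q.V) : p k Q v * p k Q w = if v = w then p k Q v else 0 := by
  split_ifs with h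
  · exact h ▸ PathAlg.p_mul_self k Q.rev v
  · exact PathAlg.p_mul_ne k Q.rev v w h

theorem sum_p : ∑ v : Q.V, p k Q v = 1 := PathAlg.sum_p k Q.rev

theorem gh_mul_src (e : Q.A) : gh k Q e * p k Q (Q.src e) = gh k Q e :=
  PathAlg.arrow_mul_tgt k Q.rev e

theorem tgt_mul_gh (e : Q.A) : p k Q (Q.tgt e) * gh k Q e = gh k Q e :=
  PathAlg.src_mul_arrow k Q.rev e

theorem gh_mul_p (e : Q.A) (v : Q.V) :
    gh k Q e * p k Q v = if Q.src e = v then gh k Q e else 0 := by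
  rw [← gh_mul_src, mul_assoc, p_mul_p, mul_ite, mul_zero]

theorem p_mul_gh (v : Q.V) (e : Q.A) :
    p k Q v * gh k Q e = if v = Q.tgt e then gh k Q e else 0 := by
  rw [← tgt_mul_gh, ← mul_assoc, p_mul_p]
  split_ifs with h
  · rw [h]
  · rw [zero_mul]

variable {k Q}

theorem induction {C : GhostAlg k Q → Prop} (algebraMap : ∀ a : k, C (algebraMap k _ a))
    (p : ∀ v, C (p k Q v)) (gh : ∀ e, C (gh k Q e)) (mul : ∀ x y, C x → C y → C (x * y))
    (add : ∀ x y, C x → C y → C (x + y)) (x : GhostAlg k Q) : C x := by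
  obtain ⟨y, rfl⟩ := RingQuot.mkAlgHom_surjective k (PathRel k Q.rev) x
  change C (PathAlg.mk k Q.rev y)
  induction y using FreeAlgebra.induction with
  | grade0 a => exact (PathAlg.mk k Q.rev).commutes a ▸ algebraMap a
  | grade1 g =>
    cases g with
    | vertex v => exact p v
    | edge e => exact gh e
  | mul a b ha hb => rw [map_mul]; exact mul _ _ ha hb
  | add a b ha hb => rw [map_add]; exact add _ _ ha hb

end GhostAlg

variable {k Q}

/-- A family of elements of a ring satisfying the defining relations of `P_k(Ē)`. -/
structure GhostFamily (Q : FinQuiver) (A : Type) [Ring A] where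
  p : Q.V → A
  gh : Q.A → A
  p_mul_p : ∀ v w, p v * p w = if v = w then p v else 0
  sum_p : ∑ v, p v = 1
  tgt_mul_gh : ∀ e, p (Q.tgt e) * gh e = gh e
  gh_mul_src : ∀ e, gh e * p (Q.src e) = gh e

namespace GhostFamily

variable {A : Type} [Ring A] [Algebra k A] (F : GhostFamily Q A)

variable (k) in
/-- The universal property of `P_k(Ē)`. -/
noncomputable def lift : GhostAlg k Q →ₐ[k] A :=
  RingQuot.liftAlgHom k ⟨FreeAlgebra.lift k fun
    | PathGen.vertex v => F.p v
    | PathGen.edge e => F.gh e, fun a b h => by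
    cases h with
    | vertex_mul_self v => simpa using (F.p_mul_p v v).trans (if_pos rfl)
    | vertex_mul_ne v w h => simpa using (F.p_mul_p v w).trans (if_neg h)
    | sum_vertex =>
      simp only [map_sum, map_one, FreeAlgebra.lift_ι_apply]
      exact F.sum_p
    | src_mul e =>
      simp only [map_mul, FreeAlgebra.lift_ι_apply]
      exact F.tgt_mul_gh e
    | mul_tgt e =>
      simp only [map_mul, FreeAlgebra.lift_ι_apply]
      exact F.gh_mul_src e⟩

@[simp]
theorem lift_p (v : Q.V) : F.lift k (GhostAlg.p k Q v) = F.p v :=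
  (RingQuot.liftAlgHom_mkAlgHom_apply k _ _ _).trans (FreeAlgebra.lift_ι_apply _ _)

@[simp]
theorem lift_gh (e : Q.A) : F.lift k (GhostAlg.gh k Q e) = F.gh e :=
  (RingQuot.liftAlgHom_mkAlgHom_apply k _ _ _).trans (FreeAlgebra.lift_ι_apply _ _)

end GhostFamily

@[simp]
theorem ghostToLeavitt_p (v : Q.V) : ghostToLeavitt k Q (GhostAlg.p k Q v) = Leavitt.p k Q v :=
  (RingQuot.liftAlgHom_mkAlgHom_apply k _ _ _).trans (FreeAlgebra.lift_ι_apply _ _)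

@[simp]
theorem ghostToLeavitt_gh (e : Q.A) : ghostToLeavitt k Q (GhostAlg.gh k Q e) = Leavitt.gh k Q e :=
  (RingQuot.liftAlgHom_mkAlgHom_apply k _ _ _).trans (FreeAlgebra.lift_ι_apply _ _)

@[simp]
theorem ghostToLeavitt_algebraMap (a : k) :
    ghostToLeavitt k Q (algebraMap k _ a) = algebraMap k (Leavitt k Q) a :=
  (revToLeavitt k Q).commutes a

namespace Leavitt

variable (k Q)

theorem p_mul_p (v w : Q.V) :
    Leavitt.p k Q v * Leavitt.p k Q w = if v = w then Leavitt.p k Q v else 0 := by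
  split_ifs with h
  · exact h ▸ p_mul_self k Q v
  · exact p_mul_ne k Q v w h

theorem ed_mul_tgt (e : Q.A) : ed k Q e * p k Q (Q.tgt e) = ed k Q e :=
  (map_mul _ _ _).symm.trans (mk_rel k Q (LeavittRel.mul_tgt e))

theorem src_mul_ed (e : Q.A) : p k Q (Q.src e) * ed k Q e = ed k Q e :=
  (map_mul _ _ _).symm.trans (mk_rel k Q (LeavittRel.src_mul e))

theorem gh_mul_ed (e f : Q.A) :
    gh k Q e * ed k Q f = if e = f then p k Q (Q.tgt e) else 0 := by
  refine (map_mul _ _ _).symm.trans ?_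
  split_ifs with h
  · exact h ▸ mk_rel k Q (LeavittRel.ghost_mul_edge_self e)
  · exact (mk_rel k Q (LeavittRel.ghost_mul_edge_ne e f h)).trans (map_zero _)

theorem sum_ed_mul_gh {v : Q.V} (hv : ¬ IsSink Q v) :
    ∑ e with Q.src e = v, ed k Q e * gh k Q e = p k Q v := by
  have hv : ∃ e, Q.src e = v := by simpa [IsSink] using hv
  have h := mk_rel k Q (LeavittRel.cuntz_krieger v hv)
  simp only [map_sum, map_mul] at h
  exact h

theorem p_mul_ed (v : Q.V) (e : Q.A) :
    p k Q v * ed k Q e = if v = Q.src e then ed k Q e else 0 := by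
  rw [← src_mul_ed, ← mul_assoc, p_mul_p]
  split_ifs with h
  · rw [h]
  · rw [zero_mul]

variable {k Q}

theorem induction {C : Leavitt k Q → Prop} (algebraMap : ∀ a : k, C (algebraMap k _ a))
    (p : ∀ v, C (p k Q v)) (ed : ∀ e, C (ed k Q e)) (gh : ∀ e, C (gh k Q e))
    (mul : ∀ x y, C x → C y → C (x * y)) (add : ∀ x y, C x → C y → C (x + y))
    (x : Leavitt k Q) : C x := by
  obtain ⟨y, rfl⟩ := RingQuot.mkAlgHom_surjective k (LeavittRel k Q) x
  change C (Leavitt.mk k Q y)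
  induction y using FreeAlgebra.induction with
  | grade0 a => exact (Leavitt.mk k Q).commutes a ▸ algebraMap a
  | grade1 g =>
    cases g with
    | vertex v => exact p v
    | edge e => exact ed e
    | ghost e => exact gh e
  | mul a b ha hb => rw [map_mul]; exact mul _ _ ha hb
  | add a b ha hb => rw [map_add]; exact add _ _ ha hb

end Leavitt

/-- A family of elements of a ring satisfying the defining relations of `L_k(E)`. -/
structure LeavittFamily (Q : FinQuiver) (A : Type) [Ring A] extends GhostFamily Q A where
  ed : Q.A → A
  src_mul_ed : ∀ e, p (Q.src e) * ed e = ed e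
  ed_mul_tgt : ∀ e, ed e * p (Q.tgt e) = ed e
  gh_mul_ed : ∀ e f, gh e * ed f = if e = f then p (Q.tgt e) else 0
  sum_ed_mul_gh : ∀ v, ¬ IsSink Q v → ∑ e with Q.src e = v, ed e * gh e = p v

namespace LeavittFamily

variable {A : Type} [Ring A] [Algebra k A] (F : LeavittFamily Q A)

variable (k) in
/-- The universal property of `L_k(E)`. -/
noncomputable def lift : Leavitt k Q →ₐ[k] A :=
  RingQuot.liftAlgHom k ⟨FreeAlgebra.lift k fun
    | LGen.vertex v => F.p v
    | LGen.edge e => F.ed e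
    | LGen.ghost e => F.gh e, fun a b h => by
    cases h with
    | vertex_mul_self v => simpa using F.p_mul_p v v
    | vertex_mul_ne v w h => simpa [h] using F.p_mul_p v w
    | sum_vertex => simpa using F.sum_p
    | src_mul e => simpa using F.src_mul_ed e
    | mul_tgt e => simpa using F.ed_mul_tgt e
    | tgt_mul_ghost e => simpa using F.tgt_mul_gh e
    | ghost_mul_src e => simpa using F.gh_mul_src e
    | ghost_mul_edge_self e => simpa using F.gh_mul_ed e e
    | ghost_mul_edge_ne e f h => simpa [h] using F.gh_mul_ed e f
    | cuntz_krieger v h => simpa using F.sum_ed_mul_gh v (by simpa [IsSink] using h)⟩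

@[simp]
theorem lift_p (v : Q.V) : F.lift k (Leavitt.p k Q v) = F.p v :=
  (RingQuot.liftAlgHom_mkAlgHom_apply k _ _ _).trans (FreeAlgebra.lift_ι_apply _ _)

@[simp]
theorem lift_gh (e : Q.A) : F.lift k (Leavitt.gh k Q e) = F.gh e :=
  (RingQuot.liftAlgHom_mkAlgHom_apply k _ _ _).trans (FreeAlgebra.lift_ι_apply _ _)

end LeavittFamily

end Generators

open GhostAlg Filter

section Boundary

variable {Q : FinQuiver}

/-- The starting vertex of the path in `E` with the arrows of the list and the end vertex `v`. -/
def pathStart : List Q.A → Q.V → Q.V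
  | [], v => v
  | e :: _, _ => Q.src e

@[simp]
theorem pathStart_nil (v : Q.V) : pathStart ([] : List Q.A) v = v := rfl

@[simp]
theorem pathStart_cons (e : Q.A) (μ : List Q.A) (v : Q.V) : pathStart (e :: μ) v = Q.src e := rfl

/-- A list of arrows and an end vertex form a path in `E`. -/
def IsPath : List Q.A → Q.V → Prop
  | [], _ => True
  | e :: μ, v => pathStart μ v = Q.tgt e ∧ IsPath μ v

variable (Q) in
/-- The filter of the paths in `E` that are long or end at a sink. Its eventual properties are
those that hold far enough along every boundary path of `E`. -/
def boundary : Filter (List Q.A × Q.V) where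
  sets := {s | ∃ m, ∀ μ v, IsPath μ v → m ≤ μ.length ∨ IsSink Q v → (μ, v) ∈ s}
  univ_sets := ⟨0, fun _ _ _ _ => trivial⟩
  sets_of_superset := fun ⟨m, h⟩ hst => ⟨m, fun μ v hμ hm => hst (h μ v hμ hm)⟩
  inter_sets := fun ⟨m, h⟩ ⟨n, h'⟩ => ⟨max m n, fun μ v hμ hmn =>
    ⟨h μ v hμ (hmn.imp_left le_of_max_le_left), h' μ v hμ (hmn.imp_left le_of_max_le_right)⟩⟩

theorem eventually_boundary {S : List Q.A × Q.V → Prop} :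
    (∀ᶠ w in boundary Q, S w) ↔
      ∃ m, ∀ μ v, IsPath μ v → m ≤ μ.length ∨ IsSink Q v → S (μ, v) :=
  Iff.rfl

theorem eventually_boundary_iff_cons {S : List Q.A × Q.V → Prop} :
    (∀ᶠ w in boundary Q, S w) ↔ (∀ v, IsSink Q v → S ([], v)) ∧
      ∀ e, ∀ᶠ w in boundary Q, pathStart w.1 w.2 = Q.tgt e → S (e :: w.1, w.2) := by
  constructor
  · rintro ⟨m, h⟩
    exact ⟨fun v hv => h [] v trivial (.inr hv), fun e => ⟨m, fun μ v hμ hm he =>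
      h (e :: μ) v ⟨he, hμ⟩ (hm.imp_left Nat.le_succ_of_le)⟩⟩
  · rintro ⟨hsink, h⟩
    obtain ⟨m, h⟩ := eventually_boundary.mp (eventually_all.mpr h)
    refine ⟨m + 1, fun μ v hμ hm => ?_⟩
    cases μ with
    | nil => exact hsink v (hm.resolve_left (by simp))
    | cons e μ => exact h μ v hμ.2 (hm.imp_left Nat.le_of_succ_le_succ) e hμ.1

theorem frequently_pathStart_eq (u : Q.V) : ∃ᶠ w in boundary Q, pathStart w.1 w.2 = u := by
  rintro ⟨m, h⟩
  suffices H : ∀ m u, ∃ μ v, IsPath μ v ∧ pathStart μ v = u ∧ (m ≤ μ.length ∨ IsSink Q v) by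
    obtain ⟨μ, v, hμ, hu, hm⟩ := H m u
    exact h μ v hμ hm hu
  clear h m u
  intro m
  induction m with
  | zero => exact fun u => ⟨[], u, trivial, rfl, .inl le_rfl⟩
  | succ m ih =>
    intro u
    by_cases hu : IsSink Q u
    · exact ⟨[], u, trivial, rfl, .inr hu⟩
    · obtain ⟨e, rfl⟩ : ∃ e, Q.src e = u := by simpa [IsSink] using hu
      obtain ⟨μ, v, hμ, he, hm⟩ := ih (Q.tgt e)
      exact ⟨e :: μ, v, ⟨he, hμ⟩, rfl, hm.imp_left Nat.succ_le_succ⟩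

end Boundary

section GhostPath

variable {k : Type} [CommRing k] {Q : FinQuiver}

variable (k) in
/-- The path of `Ē` inverse to a path of `E`; it is `0` for lists of arrows that do not form a path
with the given end vertex. -/
noncomputable def ghostPath : List Q.A → Q.V → GhostAlg k Q
  | [], v => p k Q v
  | e :: μ, v => ghostPath μ v * gh k Q e

theorem ghostPath_mul_p (μ : List Q.A) (v u : Q.V) :
    ghostPath k μ v * p k Q u = if pathStart μ v = u then ghostPath k μ v else 0 := by
  cases μ with
  | nil => exact p_mul_p k Q v u
  | cons e μ => rw [ghostPath, mul_assoc, gh_mul_p, mul_ite, mul_zero]; rfl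

theorem ghostPath_mul_gh_of_ne {μ : List Q.A} {v : Q.V} {e : Q.A} (h : pathStart μ v ≠ Q.tgt e) :
    ghostPath k μ v * gh k Q e = 0 := by
  rw [← tgt_mul_gh, ← mul_assoc, ghostPath_mul_p, if_neg h, zero_mul]

variable {X : Type} [AddCommGroup X] [Module (Leavitt k Q) X]

theorem mem_of_eventually_ghostPath_smul_mem {U : Submodule (Leavitt k Q) X} {x : X}
    (h : ∀ᶠ w in boundary Q, ghostToLeavitt k Q (ghostPath k w.1 w.2) • x ∈ U) : x ∈ U := by
  rw [eventually_boundary] at h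
  obtain ⟨m, h⟩ := h
  have sum_p_smul (x : X) : ∑ v, Leavitt.p k Q v • x = x := by
    rw [← Finset.sum_smul, Leavitt.sum_p, one_smul]
  have hp {x : X} {v : Q.V} (hx : ghostToLeavitt k Q (ghostPath k [] v) • x ∈ U) :
      Leavitt.p k Q v • x ∈ U := by
    rwa [ghostPath, ghostToLeavitt_p] at hx
  induction m generalizing x with
  | zero =>
    rw [← sum_p_smul x]
    exact U.sum_mem fun v _ => hp (h [] v trivial (.inl le_rfl))
  | succ m ih =>
    have gh_smul_mem (e : Q.A) : Leavitt.gh k Q e • x ∈ U := by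
      refine ih fun μ v hμ hm => ?_
      rw [← ghostToLeavitt_gh, ← mul_smul, ← map_mul]
      by_cases he : pathStart μ v = Q.tgt e
      · exact h (e :: μ) v ⟨he, hμ⟩ (hm.imp_left Nat.succ_le_succ)
      · rw [ghostPath_mul_gh_of_ne he, map_zero, zero_smul]
        exact U.zero_mem
    rw [← sum_p_smul x]
    refine U.sum_mem fun v _ => ?_
    by_cases hv : IsSink Q v
    · exact hp (h [] v trivial (.inr hv))
    · simp_rw [← Leavitt.sum_ed_mul_gh k Q hv, Finset.sum_smul, mul_smul]
      exact U.sum_mem fun e _ => U.smul_mem _ (gh_smul_mem e)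

variable {N : Type} [AddCommGroup N] [Module (GhostAlg k Q) N] (f : N →ₛₗ[ghostToLeavitt k Q] X)

theorem eventually_ghostPath_smul_smul_mem_range (a : Leavitt k Q) {x : X}
    (h : ∀ᶠ w in boundary Q, ghostToLeavitt k Q (ghostPath k w.1 w.2) • x ∈ Set.range f) :
    ∀ᶠ w in boundary Q, ghostToLeavitt k Q (ghostPath k w.1 w.2) • a • x ∈ Set.range f := by
  have zero_mem : 0 ∈ Set.range f := ⟨0, map_zero f⟩
  induction a using Leavitt.induction generalizing x with
  | algebraMap a =>
    filter_upwards [h] with w ⟨n, hn⟩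
    rw [← mul_smul, ← Algebra.commutes, mul_smul, ← hn, ← ghostToLeavitt_algebraMap]
    exact ⟨algebraMap k _ a • n, map_smulₛₗ f _ _⟩
  | p u =>
    filter_upwards [h] with w hw
    rw [← ghostToLeavitt_p, ← mul_smul, ← map_mul, ghostPath_mul_p]
    split_ifs
    · exact hw
    · rwa [map_zero, zero_smul]
  | gh e =>
    filter_upwards [(eventually_boundary_iff_cons.mp h).2 e] with w hw
    rw [← ghostToLeavitt_gh, ← mul_smul, ← map_mul]
    by_cases he : pathStart w.1 w.2 = Q.tgt e
    · exact hw he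
    · rwa [ghostPath_mul_gh_of_ne he, map_zero, zero_smul]
  | ed e =>
    refine eventually_boundary_iff_cons.mpr ⟨fun v hv => ?_, fun e' => ?_⟩
    · rw [ghostPath, ghostToLeavitt_p, ← mul_smul, Leavitt.p_mul_ed, if_neg (hv e ·.symm),
        zero_smul]
      exact zero_mem
    · filter_upwards [h] with w hw he'
      rw [ghostPath, map_mul, ghostToLeavitt_gh, mul_smul, ← mul_smul _ _ x, Leavitt.gh_mul_ed]
      split_ifs
      · rwa [← ghostToLeavitt_p, ← mul_smul, ← map_mul, ghostPath_mul_p, if_pos he']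
      · rwa [zero_smul, smul_zero]
  | mul a b ha hb => simpa only [mul_smul] using ha (hb h)
  | add a b ha hb =>
    filter_upwards [ha h, hb h] with w ⟨m, hm⟩ ⟨n, hn⟩
    rw [add_smul, smul_add, ← hm, ← hn]
    exact ⟨m + n, map_add f m n⟩

variable {f}

theorem eventually_ghostPath_smul_mem_range
    (hf : Submodule.span (Leavitt k Q) (Set.range f) = ⊤) (x : X) :
    ∀ᶠ w in boundary Q, ghostToLeavitt k Q (ghostPath k w.1 w.2) • x ∈ Set.range f := by
  have hx : x ∈ Submodule.span (Leavitt k Q) (Set.range f) := hf ▸ trivial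
  induction hx using Submodule.span_induction with
  | mem x hx =>
    obtain ⟨n, rfl⟩ := hx
    exact .of_forall fun w => ⟨ghostPath k w.1 w.2 • n, map_smulₛₗ f _ _⟩
  | zero => exact .of_forall fun w => ⟨0, by rw [map_zero, smul_zero]⟩
  | add x y _ _ hx hy =>
    filter_upwards [hx, hy] with w ⟨m, hm⟩ ⟨n, hn⟩
    exact ⟨m + n, by rw [map_add, hm, hn, smul_add]⟩
  | smul a x _ hx => exact eventually_ghostPath_smul_smul_mem_range f a hx

theorem span_inter_range (hf : Submodule.span (Leavitt k Q) (Set.range f) = ⊤)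
    (U : Submodule (Leavitt k Q) X) :
    Submodule.span (Leavitt k Q) (U ∩ Set.range f) = U := by
  refine le_antisymm (Submodule.span_le.mpr Set.inter_subset_left) fun x hx =>
    mem_of_eventually_ghostPath_smul_mem ?_
  filter_upwards [eventually_ghostPath_smul_mem_range hf x] with w hw
  exact Submodule.subset_span ⟨U.smul_mem _ hx, hw⟩

end GhostPath

section BoundaryGerm

variable (k : Type) [CommRing k] (Q : FinQuiver) (N : Type) [AddCommGroup N] [Module k N]

/-- The `N`-valued functions on paths that vanish far enough along every boundary path. -/
def boundaryNull : Submodule k (List Q.A × Q.V → N) where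
  carrier := {ξ | ξ =ᶠ[boundary Q] 0}
  zero_mem' := by simp
  add_mem' {ξ η} hξ hη := by
    rw [Set.mem_ofPred_eq] at *
    simpa using hξ.add hη
  smul_mem' a ξ hξ := by
    rw [Set.mem_ofPred_eq] at *
    simpa using hξ.const_smul a

variable {k Q N}

theorem mem_boundaryNull {ξ : List Q.A × Q.V → N} :
    ξ ∈ boundaryNull k Q N ↔ ∀ᶠ w in boundary Q, ξ w = 0 :=
  Iff.rfl

variable (k Q N) in
/-- Germs at the boundary of `E` of `N`-valued functions on paths. They form a module over `L_k(E)`,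
in which `n : N` is detected as the germ of `μ ↦ μ̄ • n` when `N` is a `P_k(Ē)`-module. -/
abbrev BoundaryGerm : Type := (List Q.A × Q.V → N) ⧸ boundaryNull k Q N

theorem BoundaryGerm.mk_eq_mk {ξ η : List Q.A × Q.V → N} :
    (boundaryNull k Q N).mkQ ξ = (boundaryNull k Q N).mkQ η ↔ ξ =ᶠ[boundary Q] η := by
  rw [Submodule.mkQ_apply, Submodule.mkQ_apply, Submodule.Quotient.eq,
    mem_boundaryNull]
  exact eventually_congr (.of_forall fun w => sub_eq_zero)

namespace BoundaryGerm

variable (k N)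

/-- Restriction of functions on paths to the paths starting at `u`. -/
def pFun (u : Q.V) : (List Q.A × Q.V → N) →ₗ[k] (List Q.A × Q.V → N) where
  toFun ξ w := if pathStart w.1 w.2 = u then ξ w else 0
  map_add' ξ η := by ext; simp [ite_add_zero]
  map_smul' a ξ := by ext; simp

/-- Precomposition of functions on paths with the concatenation `μ ↦ eμ`. -/
def ghFun (e : Q.A) : (List Q.A × Q.V → N) →ₗ[k] (List Q.A × Q.V → N) where
  toFun ξ w := if pathStart w.1 w.2 = Q.tgt e then ξ (e :: w.1, w.2) else 0
  map_add' ξ η := by ext; simp [ite_add_zero]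
  map_smul' a ξ := by ext; simp

/-- Transport of functions on paths along the concatenation `μ ↦ eμ`, extended by zero. -/
def edFun (e : Q.A) : (List Q.A × Q.V → N) →ₗ[k] (List Q.A × Q.V → N) where
  toFun ξ w := match w.1 with
    | [] => 0
    | f :: μ => if f = e then ξ (μ, w.2) else 0
  map_add' ξ η := by ext ⟨_ | ⟨f, μ⟩, v⟩ <;> simp [ite_add_zero]
  map_smul' a ξ := by ext ⟨_ | ⟨f, μ⟩, v⟩ <;> simp

variable {k N}

theorem pFun_null (u : Q.V) :
    boundaryNull k Q N ≤ (boundaryNull k Q N).comap (pFun k N u) := fun ξ hξ => by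
  rw [Submodule.mem_comap, mem_boundaryNull]
  filter_upwards [mem_boundaryNull.mp hξ] with w hw
  simp [pFun, hw]

theorem ghFun_null (e : Q.A) :
    boundaryNull k Q N ≤ (boundaryNull k Q N).comap (ghFun k N e) := fun ξ hξ => by
  rw [Submodule.mem_comap, mem_boundaryNull]
  filter_upwards [(eventually_boundary_iff_cons.mp (mem_boundaryNull.mp hξ)).2 e] with w hw
  simpa [ghFun] using hw

theorem edFun_null (e : Q.A) :
    boundaryNull k Q N ≤ (boundaryNull k Q N).comap (edFun k N e) := fun ξ hξ => by
  refine eventually_boundary_iff_cons.mpr ⟨fun v _ => rfl, fun f => ?_⟩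
  filter_upwards [mem_boundaryNull.mp hξ] with w hw _
  simp [edFun, hw]

theorem sum_edFun_ghFun_eventuallyEq {v : Q.V} (hv : ¬ IsSink Q v) (ξ : List Q.A × Q.V → N) :
    ∑ e with Q.src e = v, edFun k N e (ghFun k N e ξ) =ᶠ[boundary Q] pFun k N v ξ := by
  refine eventually_boundary_iff_cons.mpr ⟨fun u hu => ?_, fun f => .of_forall fun w hw => ?_⟩
  · have : u ≠ v := fun h => hv (h ▸ hu)
    simp [edFun, pFun, this]
  · rw [Finset.sum_apply, Finset.sum_filter, Finset.sum_eq_single f]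
    · simp only [edFun, ghFun, pFun, LinearMap.coe_mk, AddHom.coe_mk, if_pos, hw]
      rfl
    · exact fun e _ he => by simp [edFun, he.symm]
    · simp

variable (k Q N) in
/-- The action of the generators of `L_k(E)` on germs. -/
def family : LeavittFamily Q (Module.End k (BoundaryGerm k Q N)) where
  p u := Submodule.mapQ _ _ (pFun k N u) (pFun_null u)
  gh e := Submodule.mapQ _ _ (ghFun k N e) (ghFun_null e)
  ed e := Submodule.mapQ _ _ (edFun k N e) (edFun_null e)
  p_mul_p u v := by
    ext ξ
    split_ifs with h
    · exact mk_eq_mk.mpr (.of_forall fun w => by simp +contextual [pFun, h])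
    · refine (mk_eq_mk (η := 0)).mpr (.of_forall fun w => ?_)
      have : pathStart w.1 w.2 = u → pathStart w.1 w.2 ≠ v := fun hu => hu ▸ h
      simpa [pFun] using fun hu hv => (this hu hv).elim
  sum_p := by
    ext ξ
    rw [LinearMap.comp_apply, LinearMap.sum_apply]
    change ∑ u, (boundaryNull k Q N).mkQ (pFun k N u ξ) = (boundaryNull k Q N).mkQ ξ
    rw [← map_sum]
    exact mk_eq_mk.mpr (.of_forall fun w => by simp [pFun])
  tgt_mul_gh e := by
    ext ξ
    exact mk_eq_mk.mpr (.of_forall fun w => by simp +contextual [pFun, ghFun])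
  gh_mul_src e := by
    ext ξ
    exact mk_eq_mk.mpr (.of_forall fun w => by simp [pFun, ghFun])
  src_mul_ed e := by
    ext ξ
    refine mk_eq_mk.mpr (.of_forall fun ⟨μ, v⟩ => ?_)
    cases μ with
    | nil => exact ite_self 0
    | cons f μ =>
      by_cases h : f = e
      · simp [pFun, edFun, h]
      · simp [pFun, edFun, h]
  ed_mul_tgt e := by
    ext ξ
    refine mk_eq_mk.mpr (eventually_boundary_iff_cons.mpr ⟨fun v _ => rfl, fun f => ?_⟩)
    exact .of_forall fun w hw => by simp +contextual [pFun, edFun, hw]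
  gh_mul_ed e f := by
    ext ξ
    split_ifs with h
    · exact mk_eq_mk.mpr (.of_forall fun w => by simp [pFun, ghFun, edFun, h])
    · exact (mk_eq_mk (η := 0)).mpr (.of_forall fun w => by simp [ghFun, edFun, h])
  sum_ed_mul_gh v hv := by
    ext ξ
    rw [LinearMap.comp_apply, LinearMap.sum_apply]
    change ∑ e with Q.src e = v, (boundaryNull k Q N).mkQ (edFun k N e (ghFun k N e ξ)) =
      (boundaryNull k Q N).mkQ (pFun k N v ξ)
    rw [← map_sum]
    exact mk_eq_mk.mpr (sum_edFun_ghFun_eventuallyEq hv ξ)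

end BoundaryGerm

noncomputable instance : Module (Leavitt k Q) (BoundaryGerm k Q N) :=
  Module.compHom _ ((BoundaryGerm.family k Q N).lift k).toRingHom

namespace BoundaryGerm

theorem algebraMap_smul (a : k) (g : BoundaryGerm k Q N) :
    algebraMap k (Leavitt k Q) a • g = a • g :=
  LinearMap.congr_fun (((family k Q N).lift k).commutes a) g

theorem p_smul (u : Q.V) (ξ : List Q.A × Q.V → N) :
    Leavitt.p k Q u • (boundaryNull k Q N).mkQ ξ = (boundaryNull k Q N).mkQ (pFun k N u ξ) :=
  LinearMap.congr_fun ((family k Q N).lift_p u) _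

theorem gh_smul (e : Q.A) (ξ : List Q.A × Q.V → N) :
    Leavitt.gh k Q e • (boundaryNull k Q N).mkQ ξ = (boundaryNull k Q N).mkQ (ghFun k N e ξ) :=
  LinearMap.congr_fun ((family k Q N).lift_gh e) _

end BoundaryGerm

end BoundaryGerm

section Flat

variable {k : Type} [CommRing k] {Q : FinQuiver} {N : Type} [AddCommGroup N]
  [Module (GhostAlg k Q) N]

variable (k Q N) in
/-- The semilinear map sending `n` to the germ of `μ ↦ μ̄ • n`. -/
noncomputable def ghostPathGerm [Module k N] [IsScalarTower k (GhostAlg k Q) N] :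
    N →ₛₗ[ghostToLeavitt k Q] BoundaryGerm k Q N where
  toFun n := (boundaryNull k Q N).mkQ fun w => ghostPath k w.1 w.2 • n
  map_add' m n := by
    rw [← map_add]
    exact congrArg _ (funext fun w => smul_add _ m n)
  map_smul' a n := by
    induction a using GhostAlg.induction generalizing n with
    | algebraMap a =>
      rw [ghostToLeavitt_algebraMap, BoundaryGerm.algebraMap_smul, ← map_smul]
      refine congrArg _ (funext fun w => ?_)
      rw [Pi.smul_apply, ← mul_smul, ← Algebra.commutes, mul_smul, algebraMap_smul]
    | p u =>
      rw [ghostToLeavitt_p, BoundaryGerm.p_smul]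
      refine congrArg _ (funext fun w => ?_)
      rw [← mul_smul, ghostPath_mul_p, ite_smul, zero_smul]
      rfl
    | gh e =>
      rw [ghostToLeavitt_gh, BoundaryGerm.gh_smul]
      refine congrArg _ (funext fun w => ?_)
      rw [← mul_smul]
      by_cases h : pathStart w.1 w.2 = Q.tgt e
      · exact (if_pos h).symm
      · rw [ghostPath_mul_gh_of_ne h, zero_smul]
        exact (if_neg h).symm
    | mul a b ha hb => simp only [mul_smul, map_mul, ha, hb]
    | add a b ha hb =>
      simp only [map_add, add_smul, ← ha, ← hb, smul_add]
      exact map_add (boundaryNull k Q N).mkQ _ _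

theorem TensorPhi.ι_eq_zero_iff {n : N} :
    ι (ghostToLeavitt k Q) N n = 0 ↔ ∀ᶠ w in boundary Q, ghostPath k w.1 w.2 • n = 0 := by
  refine ⟨fun hn => ?_, fun hn => ?_⟩
  · let _ : Module k N := Module.compHom N (algebraMap k (GhostAlg k Q))
    have : IsScalarTower k (GhostAlg k Q) N := .of_algebraMap_smul fun _ _ => rfl
    have h : lift (ghostPathGerm k Q N) (ι (ghostToLeavitt k Q) N n) = 0 := by
      rw [hn, map_zero]
    rw [lift_ι] at h
    exact BoundaryGerm.mk_eq_mk.mp (h.trans (map_zero _).symm)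
  · refine (Submodule.mem_bot (Leavitt k Q)).mp (mem_of_eventually_ghostPath_smul_mem ?_)
    filter_upwards [hn] with w hw
    rw [← map_smulₛₗ, hw, map_zero]
    exact Submodule.zero_mem _

theorem rightFlat : RightFlat (GhostAlg k Q) (Leavitt k Q) (ghostToLeavitt k Q) := by
  intro M N _ _ _ _ f hf
  rw [← LinearMap.ker_eq_bot, ← span_inter_range TensorPhi.span_range_ι (LinearMap.ker _),
    Submodule.span_eq_bot]
  rintro _ ⟨hm, m, rfl⟩
  have hm : TensorPhi.ι (ghostToLeavitt k Q) N (f m) = 0 := hm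
  refine TensorPhi.ι_eq_zero_iff.mpr ?_
  filter_upwards [TensorPhi.ι_eq_zero_iff.mp hm] with w hw
  exact hf (by rw [map_smul, hw, map_zero])

end Flat

section VertexSimple

variable {R : Type} [Ring R]

theorem mem_range_rightMul {e : R} (he : e * e = e) {x : R} :
    x ∈ LinearMap.range (rightMul R e) ↔ x * e = x :=
  ⟨by rintro ⟨y, rfl⟩; exact (mul_assoc y e e).trans (congrArg (y * ·) he), fun h => ⟨x, h⟩⟩

variable {k : Type} [CommRing k] {Q : FinQuiver}

theorem mem_pIdeal {v : Q.V} {x : GhostAlg k Q} : x ∈ pIdeal k Q v ↔ x * p k Q v = x :=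
  mem_range_rightMul ((p_mul_p k Q v v).trans (if_pos rfl))

variable (k) in
/-- The generator `p_v` of the left ideal `P_k(Ē) p_v`. -/
noncomputable def pGen (v : Q.V) : pIdeal k Q v :=
  ⟨p k Q v, mem_pIdeal.mpr ((p_mul_p k Q v v).trans (if_pos rfl))⟩

theorem smul_pGen {v : Q.V} (x : pIdeal k Q v) : (x : GhostAlg k Q) • pGen k v = x :=
  Subtype.ext (mem_pIdeal.mp x.2)

variable (k) in
/-- The generator of `coker ν_v`. -/
noncomputable def cokerGen (v : Q.V) : CokerNu k Q v := (LinearMap.range (nu k Q v)).mkQ (pGen k v)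

theorem exists_smul_cokerGen {v : Q.V} (x : CokerNu k Q v) :
    ∃ r : GhostAlg k Q, r • cokerGen k v = x := by
  obtain ⟨y, rfl⟩ := Submodule.mkQ_surjective _ x
  exact ⟨y, by rw [cokerGen, ← map_smul, smul_pGen]⟩

variable {N : Type} [AddCommGroup N] [Module (GhostAlg k Q) N]

variable (k) in
/-- The element `n` is the image of the generator under a homomorphism `coker ν_v → N`, see
`CokerNu.lift`. -/
structure IsVertexVector (v : Q.V) (n : N) : Prop where
  p_smul : p k Q v • n = n
  gh_smul : ∀ e, gh k Q e • n = 0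

theorem IsVertexVector.p_smul_of_ne {v u : Q.V} {n : N} (h : IsVertexVector k v n) (hu : u ≠ v) :
    p k Q u • n = 0 := by
  rw [← h.p_smul, ← mul_smul, p_mul_p, if_neg hu, zero_smul]

theorem IsVertexVector.exists_smul_eq {v : Q.V} {n : N} (h : IsVertexVector k v n)
    (r : GhostAlg k Q) : ∃ a : k, r • n = algebraMap k (GhostAlg k Q) a • n := by
  induction r using GhostAlg.induction with
  | algebraMap a => exact ⟨a, rfl⟩
  | p u =>
    by_cases hu : u = v
    · exact ⟨1, by rw [map_one, one_smul, hu, h.p_smul]⟩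
    · exact ⟨0, by rw [map_zero, zero_smul, h.p_smul_of_ne hu]⟩
  | gh e => exact ⟨0, by rw [map_zero, zero_smul, h.gh_smul]⟩
  | mul x y hx hy =>
    obtain ⟨a, ha⟩ := hx
    obtain ⟨b, hb⟩ := hy
    exact ⟨b * a, by rw [mul_smul, hb, ← mul_smul, ← Algebra.commutes, mul_smul, ha, ← mul_smul,
      ← map_mul]⟩
  | add x y hx hy =>
    obtain ⟨a, ha⟩ := hx
    obtain ⟨b, hb⟩ := hy
    exact ⟨a + b, by rw [add_smul, ha, hb, ← add_smul, ← map_add]⟩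

variable (k) in
theorem isVertexVector_cokerGen (v : Q.V) : IsVertexVector k v (cokerGen k v) where
  p_smul := by
    rw [cokerGen, ← map_smul]
    exact congrArg _ (smul_pGen (pGen k v))
  gh_smul e := by
    rw [cokerGen, ← map_smul]
    refine (Submodule.Quotient.mk_eq_zero _).mpr ?_
    by_cases he : Q.src e = v
    · refine ⟨Pi.single ⟨e, he⟩ (pGen k (Q.tgt e)), Subtype.ext ?_⟩
      change ∑ f : {f : Q.A // Q.src f = v}, ((Pi.single ⟨e, he⟩ (pGen k (Q.tgt e)) :
        (f : {f : Q.A // Q.src f = v}) → pIdeal k Q (Q.tgt f)) f : GhostAlg k Q) * gh k Q f =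
          gh k Q e * p k Q v
      rw [Finset.sum_eq_single ⟨e, he⟩, Pi.single_eq_same, gh_mul_p, if_pos he]
      · exact tgt_mul_gh k Q e
      · intro f _ hf
        rw [Pi.single_eq_of_ne hf, Submodule.coe_zero, zero_mul]
      · simp
    · convert Submodule.zero_mem _
      exact Subtype.ext ((gh_mul_p k Q e v).trans (if_neg he))

/-- The homomorphism `coker ν_v → N` determined by the image of the generator. -/
noncomputable def CokerNu.lift {v : Q.V} {n : N} (h : IsVertexVector k v n) :
    CokerNu k Q v →ₗ[GhostAlg k Q] N :=
  (LinearMap.range (nu k Q v)).liftQ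
    ((LinearMap.toSpanSingleton (GhostAlg k Q) N n).comp (pIdeal k Q v).subtype) <| by
      rintro _ ⟨x, rfl⟩
      change (∑ e : {e : Q.A // Q.src e = v}, (x e : GhostAlg k Q) * gh k Q e) • n = 0
      simp only [Finset.sum_smul, mul_smul, h.gh_smul, smul_zero, Finset.sum_const_zero]

theorem CokerNu.lift_cokerGen {v : Q.V} {n : N} (h : IsVertexVector k v n) :
    CokerNu.lift h (cokerGen k v) = n :=
  h.p_smul

end VertexSimple

section VertexSimpleField

variable {k : Type} [Field k] {Q : FinQuiver} {N : Type} [AddCommGroup N]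
  [Module (GhostAlg k Q) N]

theorem CokerNu.lift_injective {v : Q.V} {n : N} (h : IsVertexVector k v n) (hn : n ≠ 0) :
    Function.Injective (CokerNu.lift h) := by
  rw [injective_iff_map_eq_zero]
  intro x hx
  obtain ⟨r, rfl⟩ := exists_smul_cokerGen x
  obtain ⟨a, ha⟩ := (isVertexVector_cokerGen k v).exists_smul_eq r
  rw [ha, map_smul, CokerNu.lift_cokerGen] at hx
  suffices a = 0 by rw [ha, this, map_zero, zero_smul]
  by_contra h0
  refine hn ?_
  rw [← one_smul (GhostAlg k Q) n, ← map_one (algebraMap k _), ← inv_mul_cancel₀ h0, map_mul,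
    mul_smul, hx, smul_zero]

theorem exists_isVertexVector {n : N} (hn : n ≠ 0)
    (h : ∀ᶠ w in boundary Q, ghostPath k w.1 w.2 • n = 0) :
    ∃ v, ¬ IsSink Q v ∧ ∃ n' : N, n' ≠ 0 ∧ IsVertexVector k v n' := by
  have exists_p_smul_ne {n : N} (hn : n ≠ 0) : ∃ v, p k Q v • n ≠ 0 := by
    by_contra! h0
    exact hn (by rw [← one_smul (GhostAlg k Q) n, ← sum_p, Finset.sum_smul,
      Finset.sum_eq_zero fun v _ => h0 v])
  rw [eventually_boundary] at h
  obtain ⟨m, h⟩ := h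
  induction m generalizing n with
  | zero =>
    obtain ⟨v, hv⟩ := exists_p_smul_ne hn
    exact (hv (h [] v trivial (.inl le_rfl))).elim
  | succ m ih =>
    by_cases hgh : ∀ e, gh k Q e • n = 0
    · obtain ⟨v, hv⟩ := exists_p_smul_ne hn
      refine ⟨v, fun hs => hv (h [] v trivial (.inr hs)), p k Q v • n, hv, ?_, fun e => ?_⟩
      · rw [← mul_smul, p_mul_p, if_pos rfl]
      · rw [← mul_smul, gh_mul_p, ite_smul, hgh, zero_smul, ite_self]
    · push Not at hgh
      obtain ⟨e, he⟩ := hgh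
      refine ih he (fun μ v hμ hm => ?_)
      rw [← mul_smul]
      by_cases hs : pathStart μ v = Q.tgt e
      · exact h (e :: μ) v ⟨hs, hμ⟩ (hm.imp_left Nat.succ_le_succ)
      · rw [ghostPath_mul_gh_of_ne hs, zero_smul]

end VertexSimpleField

section Length

variable {k : Type} [Field k] {Q : FinQuiver} {N : Type} [AddCommGroup N]
  [Module (GhostAlg k Q) N]

theorem subsingleton_tensorPhi_cokerNu {v : Q.V} (hv : ¬ IsSink Q v) :
    Subsingleton (TensorPhi _ _ (ghostToLeavitt k Q) (CokerNu k Q v)) := by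
  have ι_gen : TensorPhi.ι (ghostToLeavitt k Q) _ (cokerGen k v) = 0 := by
    refine TensorPhi.ι_eq_zero_iff.mpr (eventually_boundary.mpr ⟨1, fun μ u _ hm => ?_⟩)
    cases μ with
    | nil =>
      have hu : IsSink Q u := hm.resolve_left (by simp)
      exact (isVertexVector_cokerGen k v).p_smul_of_ne fun h => hv (h ▸ hu)
    | cons e μ => rw [ghostPath, mul_smul, (isVertexVector_cokerGen k v).gh_smul, smul_zero]
  refine TensorPhi.subsingleton_of_ι_eq_zero fun x => ?_
  obtain ⟨r, rfl⟩ := exists_smul_cokerGen x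
  rw [map_smulₛₗ, ι_gen, smul_zero]

theorem exists_equiv_cokerNu [IsSimpleModule (GhostAlg k Q) N] {n : N} (hn : n ≠ 0)
    (h : TensorPhi.ι (ghostToLeavitt k Q) N n = 0) :
    ∃ v, ¬ IsSink Q v ∧ Nonempty (N ≃ₗ[GhostAlg k Q] CokerNu k Q v) := by
  obtain ⟨v, hv, n', hn', hvn⟩ := exists_isVertexVector hn (TensorPhi.ι_eq_zero_iff.mp h)
  refine ⟨v, hv, ⟨(LinearEquiv.ofBijective (CokerNu.lift hvn)
    ⟨CokerNu.lift_injective hvn hn', ?_⟩).symm⟩⟩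
  refine LinearMap.surjective_of_ne_zero fun h0 => hn' ?_
  rw [← CokerNu.lift_cokerGen hvn, h0, LinearMap.zero_apply]

theorem isSimpleModule_tensorPhi [IsSimpleModule (GhostAlg k Q) N]
    [Nontrivial (TensorPhi _ _ (ghostToLeavitt k Q) N)] :
    IsSimpleModule (Leavitt k Q) (TensorPhi _ _ (ghostToLeavitt k Q) N) := by
  refine (isSimpleModule_iff _ _).mpr { eq_bot_or_eq_top := fun U => ?_ }
  rw [← span_inter_range TensorPhi.span_range_ι U]
  refine (eq_bot_or_eq_top (U.comap (TensorPhi.ι (ghostToLeavitt k Q) N))).imp (fun h => ?_)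
    fun h => ?_
  · rw [Submodule.span_eq_bot]
    rintro _ ⟨hn, n, rfl⟩
    have hn : n ∈ U.comap (TensorPhi.ι (ghostToLeavitt k Q) N) := hn
    rw [h, Submodule.mem_bot] at hn
    rw [hn, map_zero]
  · rw [← TensorPhi.span_range_ι]
    refine congrArg _ (Set.inter_eq_right.mpr ?_)
    rintro _ ⟨n, rfl⟩
    exact (h ▸ Submodule.mem_top : n ∈ U.comap (TensorPhi.ι (ghostToLeavitt k Q) N))

open Classical in
theorem length_tensorPhi_of_isSimpleModule [IsSimpleModule (GhostAlg k Q) N] :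
    Module.length (Leavitt k Q) (TensorPhi _ _ (ghostToLeavitt k Q) N) =
      if ∃ v, ¬ IsSink Q v ∧ Nonempty (N ≃ₗ[GhostAlg k Q] CokerNu k Q v) then 0 else 1 := by
  split_ifs with h
  · obtain ⟨v, hv, ⟨e⟩⟩ := h
    have := subsingleton_tensorPhi_cokerNu (k := k) hv
    rw [(TensorPhi.congr e).length_eq, Module.length_eq_zero]
  · have := IsSimpleModule.nontrivial (GhostAlg k Q) N
    obtain ⟨n, hn⟩ := exists_ne (0 : N)
    have : Nontrivial (TensorPhi _ _ (ghostToLeavitt k Q) N) :=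
      nontrivial_of_ne _ _ fun h0 => h (exists_equiv_cokerNu hn h0)
    have := isSimpleModule_tensorPhi (k := k) (Q := Q) (N := N)
    exact Module.length_eq_one _ _

theorem length_tensorPhi_eq_add {A B : Submodule (GhostAlg k Q) N} (h : A ≤ B) :
    Module.length (Leavitt k Q) (TensorPhi _ _ (ghostToLeavitt k Q) B) =
      Module.length (Leavitt k Q) (TensorPhi _ _ (ghostToLeavitt k Q) A) +
      Module.length (Leavitt k Q)
        (TensorPhi _ _ (ghostToLeavitt k Q) (B ⧸ A.comap B.subtype)) := by
  have hexact : Function.Exact (Submodule.inclusion h) (A.comap B.subtype).mkQ := by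
    rw [LinearMap.exact_iff, Submodule.ker_mkQ, Submodule.range_inclusion]
  exact Module.length_eq_add_of_exact _ _
    (rightFlat _ _ _ (Submodule.inclusion_injective h))
    (TensorPhi.tmap_surjective (Submodule.mkQ_surjective _))
    (TensorPhi.tmap_exact hexact (Submodule.mkQ_surjective _))

theorem length_tensorPhi_last_eq_sum {ℓ : ℕ} {c : Fin (ℓ + 1) → Submodule (GhostAlg k Q) N}
    (h0 : c 0 = ⊥) (hc : ∀ i : Fin ℓ, c i.castSucc ≤ c i.succ) :
    Module.length (Leavitt k Q) (TensorPhi _ _ (ghostToLeavitt k Q) (c (Fin.last ℓ))) =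
      ∑ i, Module.length (Leavitt k Q)
        (TensorPhi _ _ (ghostToLeavitt k Q) (SeriesFactor c i)) := by
  induction ℓ with
  | zero =>
    have : Subsingleton (c (Fin.last 0)) := (Submodule.subsingleton_iff_eq_bot).mpr h0
    have := TensorPhi.subsingleton_of_ι_eq_zero (φ := ghostToLeavitt k Q)
      fun x : c (Fin.last 0) => by rw [Subsingleton.elim x 0, map_zero]
    rw [Module.length_eq_zero, Fin.sum_univ_zero]
  | succ ℓ ih =>
    rw [Fin.sum_univ_castSucc, ← Fin.succ_last, length_tensorPhi_eq_add (hc (Fin.last ℓ))]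
    exact congrArg (· + _) (ih (c := c ∘ Fin.castSucc) h0 fun i => hc i.castSucc)

theorem length_tensorPhi_of_isCompSeries {ℓ : ℕ} {c : Fin (ℓ + 1) → Submodule (GhostAlg k Q) N}
    (hc : IsCompSeries ℓ c) {T : Finset (Fin ℓ)}
    (hT : ∀ i, i ∈ T ↔ ∃ v, ¬ IsSink Q v ∧
      Nonempty (SeriesFactor c i ≃ₗ[GhostAlg k Q] CokerNu k Q v)) :
    Module.length (Leavitt k Q) (TensorPhi _ _ (ghostToLeavitt k Q) N) = (ℓ - T.card : ℕ) := by
  classical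
  obtain ⟨h0, hlast, hc⟩ := hc
  have e : N ≃ₗ[GhostAlg k Q] c (Fin.last ℓ) := (LinearEquiv.ofTop _ hlast).symm
  rw [(TensorPhi.congr e).length_eq, length_tensorPhi_last_eq_sum h0 fun i => (hc i).1.le]
  have length_factor (i : Fin ℓ) : Module.length (Leavitt k Q)
      (TensorPhi _ _ (ghostToLeavitt k Q) (SeriesFactor c i)) = if i ∈ T then 0 else 1 := by
    have := (hc i).2
    rw [length_tensorPhi_of_isSimpleModule]
    exact if_congr (hT i).symm rfl rfl
  rw [Finset.sum_congr rfl fun i _ => length_factor i]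
  simp [Finset.sum_ite, Finset.filter_not, Finset.card_sdiff]

end Length

section CompSeries

variable {R M : Type} [Ring R] [AddCommGroup M] [Module R M]

theorem exists_isCompSeries {n : ℕ} (h : Module.length R M = n) :
    ∃ c : Fin (n + 1) → Submodule R M, IsCompSeries n c := by
  have hfin : IsFiniteLength R M := Module.length_ne_top_iff.mp (h ▸ ENat.natCast_ne_top n)
  obtain ⟨s, hbot, htop⟩ := isFiniteLength_iff_exists_compositionSeries.mp hfin
  obtain rfl : s.length = n := by
    exact_mod_cast (Module.length_compositionSeries s hbot htop).trans h
  exact ⟨s, hbot, htop, fun i =>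
    ⟨(s.step i).lt, (covBy_iff_quot_is_simple (s.step i).le).mp (s.step i)⟩⟩

end CompSeries

theorem isFiniteLength_tensorPhi {k : Type} [Field k] {Q : FinQuiver} {N : Type} [AddCommGroup N]
    [Module (GhostAlg k Q) N] (h : IsFiniteLength (GhostAlg k Q) N) :
    IsFiniteLength (Leavitt k Q) (TensorPhi _ _ (ghostToLeavitt k Q) N) := by
  classical
  obtain ⟨ℓ, hℓ⟩ := ENat.ne_top_iff_exists.mp (Module.length_ne_top_iff.mpr h)
  obtain ⟨c, hc⟩ := exists_isCompSeries hℓ.symm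
  have hlen := length_tensorPhi_of_isCompSeries (k := k) hc (T := {i | ∃ v, ¬ IsSink Q v ∧
    Nonempty (SeriesFactor c i ≃ₗ[GhostAlg k Q] CokerNu k Q v)}) (by simp)
  exact Module.length_ne_top_iff.mp (hlen ▸ ENat.natCast_ne_top _)

section Descent

variable {k : Type} [CommRing k] {Q : FinQuiver} {F M : Type} [AddCommGroup F]
  [Module (GhostAlg k Q) F] [AddCommGroup M] [Module (Leavitt k Q) M]

theorem TensorPhi.exists_equiv_of_fg_ker
    {f : TensorPhi _ _ (ghostToLeavitt k Q) F →ₗ[Leavitt k Q] M}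
    (hf : Function.Surjective f) (hker : (LinearMap.ker f).FG) :
    ∃ K : Submodule (GhostAlg k Q) F, K.FG ∧
      Nonempty (M ≃ₗ[Leavitt k Q] TensorPhi _ _ (ghostToLeavitt k Q) (F ⧸ K)) := by
  classical
  have hspan := span_inter_range (span_range_ι (φ := ghostToLeavitt k Q) (M := F))
    (LinearMap.ker f)
  rw [← hspan, Submodule.fg_span_iff_fg_span_finset_subset] at hker
  obtain ⟨s, hs, hs_span⟩ := hker
  rw [← Set.image_preimage_eq_inter_range, Finset.subset_set_image_iff] at hs
  obtain ⟨t, ht, rfl⟩ := hs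
  let K := Submodule.span (GhostAlg k Q) (t : Set F)
  have range_le_ker : LinearMap.range (tmap _ _ (ghostToLeavitt k Q) K.subtype) ≤
      LinearMap.ker f := by
    rw [LinearMap.range_le_ker_iff]
    have : K ≤ (LinearMap.ker f).comap (ι _ _) := Submodule.span_le.mpr ht
    exact hom_ext fun x => this x.2
  have ker_le_range : LinearMap.ker f ≤
      LinearMap.range (tmap _ _ (ghostToLeavitt k Q) K.subtype) := by
    rw [← hspan, hs_span, Submodule.span_le, Finset.coe_image]
    rintro _ ⟨x, hx, rfl⟩
    exact ⟨ι _ _ ⟨x, Submodule.subset_span hx⟩, rfl⟩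
  have hexact : Function.Exact (tmap _ _ (ghostToLeavitt k Q) K.subtype)
      (tmap _ _ (ghostToLeavitt k Q) K.mkQ) :=
    tmap_exact (LinearMap.exact_subtype_mkQ K) K.mkQ_surjective
  have ker_eq := (ker_le_range.antisymm range_le_ker).trans hexact.linearMap_ker_eq.symm
  exact ⟨K, ⟨t, rfl⟩, ⟨(f.quotKerEquivOfSurjective hf).symm ≪≫ₗ
    Submodule.quotEquivOfEq _ _ ker_eq ≪≫ₗ
    (tmap _ _ (ghostToLeavitt k Q) K.mkQ).quotKerEquivOfSurjective
      (tmap_surjective K.mkQ_surjective)⟩⟩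

theorem exists_tensorPhi_equiv_of_finitePresentation [Module.FinitePresentation (Leavitt k Q) M] :
    ∃ (n : ℕ) (K : Submodule (GhostAlg k Q) (Fin n → GhostAlg k Q)), K.FG ∧
      Nonempty (M ≃ₗ[Leavitt k Q]
        TensorPhi _ _ (ghostToLeavitt k Q) ((Fin n → GhostAlg k Q) ⧸ K)) := by
  obtain ⟨n, m, hm⟩ := Module.Finite.exists_fin (R := Leavitt k Q) (M := M)
  let f : (Fin n → GhostAlg k Q) →ₛₗ[ghostToLeavitt k Q] M :=
    { toFun x := ∑ i, ghostToLeavitt k Q (x i) • m i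
      map_add' x y := by simp only [Pi.add_apply, map_add, add_smul, Finset.sum_add_distrib]
      map_smul' r x := by
        simp only [Pi.smul_apply, smul_eq_mul, map_mul, mul_smul, Finset.smul_sum] }
  have f_single (i : Fin n) : f (Pi.single i 1) = m i := by
    refine (Fintype.sum_eq_single i fun j hj => ?_).trans ?_
    · rw [Pi.single_eq_of_ne hj, map_zero, zero_smul]
    · rw [Pi.single_eq_same, map_one, one_smul]
  have hf : Function.Surjective (TensorPhi.lift f) := by
    rw [← LinearMap.range_eq_top, TensorPhi.range_lift, ← top_le_iff, ← hm]
    exact Submodule.span_mono (Set.range_subset_iff.mpr fun i => ⟨_, f_single i⟩)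
  obtain ⟨K, hK, e⟩ :=
    TensorPhi.exists_equiv_of_fg_ker hf (Module.FinitePresentation.fg_ker _ hf)
  exact ⟨n, K, hK, e⟩

end Descent

section Presenting

variable {k : Type} [CommRing k] {Q : FinQuiver}

variable (k Q) in
/-- The span of the paths of length at most one in `P_k(Ē)`. -/
noncomputable def shortPaths : Submodule k (GhostAlg k Q) :=
  Submodule.span k (Set.range (p k Q) ∪ Set.range (gh k Q))

theorem fg_shortPaths : (shortPaths k Q).FG :=
  Submodule.fg_span ((Set.finite_range _).union (Set.finite_range _))

theorem p_mem_shortPaths (u : Q.V) : p k Q u ∈ shortPaths k Q :=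
  Submodule.subset_span (.inl ⟨u, rfl⟩)

theorem one_le_shortPaths : 1 ≤ shortPaths k Q := by
  rw [Submodule.one_le, ← sum_p]
  exact Submodule.sum_mem _ fun u _ => p_mem_shortPaths u

theorem exists_mem_shortPaths_pow (x : GhostAlg k Q) : ∃ d, x ∈ shortPaths k Q ^ d := by
  induction x using GhostAlg.induction with
  | algebraMap a => exact ⟨0, by rw [pow_zero]; exact Submodule.algebraMap_mem a⟩
  | p u => exact ⟨1, by rw [pow_one]; exact p_mem_shortPaths u⟩
  | gh e => exact ⟨1, by rw [pow_one]; exact Submodule.subset_span (.inr ⟨e, rfl⟩)⟩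
  | mul x y hx hy =>
    obtain ⟨m, hm⟩ := hx
    obtain ⟨n, hn⟩ := hy
    exact ⟨m + n, by rw [pow_add]; exact Submodule.mul_mem_mul hm hn⟩
  | add x y hx hy =>
    obtain ⟨m, hm⟩ := hx
    obtain ⟨n, hn⟩ := hy
    exact ⟨max m n, Submodule.add_mem _ (pow_le_pow_right' one_le_shortPaths (le_max_left m n) hm)
      (pow_le_pow_right' one_le_shortPaths (le_max_right m n) hn)⟩

theorem exists_forall_mem_shortPaths_pow {α : Type} [Finite α] (x : α → GhostAlg k Q) :
    ∃ d, ∀ i, x i ∈ shortPaths k Q ^ d := by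
  choose d hd using fun i => exists_mem_shortPaths_pow (x i)
  obtain ⟨m, hm⟩ := Set.finite_range d |>.bddAbove
  exact ⟨m, fun i => pow_le_pow_right' one_le_shortPaths (hm ⟨i, rfl⟩) (hd i)⟩

theorem p_mul_mem_shortPaths_pow (u : Q.V) {d : ℕ} {x : GhostAlg k Q}
    (hx : x ∈ shortPaths k Q ^ (d + 1)) : p k Q u * x ∈ shortPaths k Q ^ (d + 1) := by
  rw [pow_succ'] at hx ⊢
  suffices h : shortPaths k Q ≤ (shortPaths k Q).comap (LinearMap.mulLeft k (p k Q u)) by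
    induction hx using Submodule.mul_induction_on' with
    | mem_mul_mem y hy z hz =>
      rw [← mul_assoc]
      exact Submodule.mul_mem_mul (h hy) hz
    | add y _ z _ hy hz =>
      rw [mul_add]
      exact Submodule.add_mem _ hy hz
  refine Submodule.span_le.mpr ?_
  rintro _ (⟨v, rfl⟩ | ⟨e, rfl⟩) <;>
    rw [SetLike.mem_coe, Submodule.mem_comap, LinearMap.mulLeft_apply]
  · rw [p_mul_p]
    split_ifs
    exacts [p_mem_shortPaths u, Submodule.zero_mem _]
  · rw [p_mul_gh]
    split_ifs
    exacts [Submodule.subset_span (.inr ⟨e, rfl⟩), Submodule.zero_mem _]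

variable {N : Type} [AddCommGroup N] [Module (GhostAlg k Q) N] [Module k N]

/-- The `P_k(Ē)`-module `N` is presented by the vectors of `V`, with the relations `p_u • x = y` and
`ē • x = y` holding between vectors `x`, `y` of `V`. -/
structure IsPresenting (V : Submodule k N) : Prop where
  p_smul_mem : ∀ u, ∀ x ∈ V, p k Q u • x ∈ V
  span_eq_top : Submodule.span (GhostAlg k Q) (V : Set N) = ⊤
  exists_linearMap_eqOn : ∀ (B : Type) [AddCommGroup B] [Module (GhostAlg k Q) B] [Module k B]
    [IsScalarTower k (GhostAlg k Q) B] (s : N →ₗ[k] B),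
    (∀ u, ∀ x ∈ V, p k Q u • s x = s (p k Q u • x)) →
    (∀ e, ∀ x ∈ V, gh k Q e • x ∈ V → gh k Q e • s x = s (gh k Q e • x)) →
    ∃ g : N →ₗ[GhostAlg k Q] B, Set.EqOn g s V

variable [IsScalarTower k (GhostAlg k Q) N]

theorem smul_eq_of_mem_shortPaths_pow {B : Type} [AddCommGroup B] [Module (GhostAlg k Q) B]
    [Module k B] [IsScalarTower k (GhostAlg k Q) B] {V : Submodule k N} {s : N →ₗ[k] B}
    (hp : ∀ u, ∀ x ∈ V, p k Q u • s x = s (p k Q u • x))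
    (hgh : ∀ e, ∀ x ∈ V, gh k Q e • x ∈ V → gh k Q e • s x = s (gh k Q e • x)) {d : ℕ} {m : N}
    (hm : ∀ r ∈ shortPaths k Q ^ d, r • m ∈ V) {r : GhostAlg k Q}
    (hr : r ∈ shortPaths k Q ^ d) : r • s m = s (r • m) := by
  induction d generalizing r with
  | zero =>
    rw [pow_zero, Submodule.mem_one] at hr
    obtain ⟨a, rfl⟩ := hr
    rw [algebraMap_smul, algebraMap_smul, map_smul]
  | succ d ih =>
    have hmono : shortPaths k Q ^ d ≤ shortPaths k Q ^ (d + 1) :=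
      pow_le_pow_right' one_le_shortPaths d.le_succ
    have ih {r : GhostAlg k Q} (hr : r ∈ shortPaths k Q ^ d) : r • s m = s (r • m) :=
      ih (fun r hr => hm r (hmono hr)) hr
    let S : Submodule k (GhostAlg k Q) := LinearMap.eqLocus
      ((LinearMap.toSpanSingleton (GhostAlg k Q) B (s m)).restrictScalars k)
      (s ∘ₗ (LinearMap.toSpanSingleton (GhostAlg k Q) N m).restrictScalars k)
    suffices shortPaths k Q * shortPaths k Q ^ d ≤ S from this (pow_succ' (shortPaths k Q) d ▸ hr)
    refine Submodule.mul_le.mpr fun a ha r hr => ?_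
    suffices shortPaths k Q ≤ S.comap (LinearMap.mulRight k r) from this ha
    refine Submodule.span_le.mpr fun a ha => ?_
    have har : (a * r) • m ∈ V := hm _ <| by
      rw [pow_succ']
      exact Submodule.mul_mem_mul (Submodule.subset_span ha) hr
    change (a * r) • s m = s ((a * r) • m)
    rw [mul_smul] at har
    rw [mul_smul, mul_smul, ih hr]
    rcases ha with ⟨u, rfl⟩ | ⟨e, rfl⟩
    · exact hp u _ (hm r (hmono hr))
    · exact hgh e _ (hm r (hmono hr)) har

/-- The vectors obtained from the `m i` by paths of length at most `d`. -/
noncomputable def pathSpan {ι : Type} (m : ι → N) (d : ℕ) : Submodule k N :=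
  ⨆ i, (shortPaths k Q ^ d).map
    ((LinearMap.toSpanSingleton (GhostAlg k Q) N (m i)).restrictScalars k)

section PathSpan

variable {ι : Type} {m : ι → N} {d : ℕ}

theorem smul_mem_pathSpan (i : ι) {r : GhostAlg k Q} (hr : r ∈ shortPaths k Q ^ d) :
    r • m i ∈ pathSpan (Q := Q) (k := k) m d :=
  Submodule.mem_iSup_of_mem i ⟨r, hr, rfl⟩

theorem pathSpan_le {U : Submodule k N}
    (h : ∀ i, ∀ r ∈ shortPaths k Q ^ d, r • m i ∈ U) : pathSpan (Q := Q) m d ≤ U :=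
  iSup_le fun i => Submodule.map_le_iff_le_comap.mpr (h i)

theorem mem_pathSpan (i : ι) : m i ∈ pathSpan (Q := Q) (k := k) m d := by
  rw [← one_smul (GhostAlg k Q) (m i)]
  exact smul_mem_pathSpan i (Submodule.one_le.mp (one_le_pow_of_one_le' one_le_shortPaths _))

theorem p_smul_mem_pathSpan (u : Q.V) {x : N} (hx : x ∈ pathSpan (Q := Q) (k := k) m (d + 1)) :
    p k Q u • x ∈ pathSpan (Q := Q) (k := k) m (d + 1) := by
  suffices pathSpan (Q := Q) m (d + 1) ≤
      (pathSpan (Q := Q) m (d + 1)).comap (Algebra.lsmul k k N (p k Q u)) from this hx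
  refine pathSpan_le fun i r hr => ?_
  change p k Q u • r • m i ∈ pathSpan m (d + 1)
  rw [← mul_smul]
  exact smul_mem_pathSpan i (p_mul_mem_shortPaths_pow u hr)

theorem exists_linearMap_eqOn_pathSpan [Fintype ι]
    (hm : Submodule.span (GhostAlg k Q) (Set.range m) = ⊤) {t : Set (ι → GhostAlg k Q)}
    (ht : Submodule.span _ t = LinearMap.ker (Fintype.linearCombination (GhostAlg k Q) m))
    (hd : ∀ z ∈ t, ∀ i, z i ∈ shortPaths k Q ^ d)
    {B : Type} [AddCommGroup B] [Module (GhostAlg k Q) B] [Module k B]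
    [IsScalarTower k (GhostAlg k Q) B] {s : N →ₗ[k] B}
    (hs : ∀ i, ∀ r ∈ shortPaths k Q ^ d, r • s (m i) = s (r • m i)) :
    ∃ g : N →ₗ[GhostAlg k Q] B, Set.EqOn g s (pathSpan (Q := Q) (k := k) m d) := by
  classical
  let f := Fintype.linearCombination (GhostAlg k Q) m
  have hf : Function.Surjective f := by
    rw [← LinearMap.range_eq_top, Fintype.range_linearCombination, hm]
  let g₀ := Fintype.linearCombination (GhostAlg k Q) (s ∘ m)
  have hker : LinearMap.ker f ≤ LinearMap.ker g₀ := by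
    rw [← ht, Submodule.span_le]
    intro z hz
    have hz0 : f z = 0 := LinearMap.mem_ker.mp (ht ▸ Submodule.subset_span hz)
    change ∑ i, z i • s (m i) = 0
    rw [Finset.sum_congr rfl fun i _ => hs i (z i) (hd z hz i), ← map_sum]
    exact (congrArg s hz0).trans (map_zero s)
  obtain ⟨g, hg⟩ : ∃ g : N →ₗ[GhostAlg k Q] B, g ∘ₗ f = g₀ :=
    ⟨(LinearMap.ker f).liftQ g₀ hker ∘ₗ (f.quotKerEquivOfSurjective hf).symm, by ext; simp⟩
  have g_m (i : ι) : g (m i) = s (m i) := by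
    simpa [f, g₀] using LinearMap.congr_fun hg (Pi.single i 1)
  suffices pathSpan m d ≤ LinearMap.eqLocus (g.restrictScalars k) s from ⟨g, this⟩
  refine pathSpan_le fun i r hr => ?_
  change g (r • m i) = s (r • m i)
  rw [map_smul, g_m, hs i r hr]

end PathSpan

variable (k Q N) in
theorem exists_isPresenting [Module.FinitePresentation (GhostAlg k Q) N] :
    ∃ V : Submodule k N, V.FG ∧ IsPresenting (Q := Q) V := by
  obtain ⟨n, m, hm⟩ := Module.Finite.exists_fin (R := GhostAlg k Q) (M := N)
  have hf : Function.Surjective (Fintype.linearCombination (GhostAlg k Q) m) := by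
    rw [← LinearMap.range_eq_top, Fintype.range_linearCombination, hm]
  obtain ⟨t, ht⟩ := Module.FinitePresentation.fg_ker _ hf
  obtain ⟨d, hd⟩ := exists_forall_mem_shortPaths_pow fun i : t × Fin n => i.1.1 i.2
  replace hd (z) (hz : z ∈ t) (j : Fin n) : z j ∈ shortPaths k Q ^ (d + 1) :=
    pow_le_pow_right' one_le_shortPaths d.le_succ (hd (⟨z, hz⟩, j))
  refine ⟨pathSpan m (d + 1), Submodule.fg_iSup _ fun j => (fg_shortPaths.pow _).map _,
    fun u _ => p_smul_mem_pathSpan u, ?_, fun B _ _ _ _ s hp hgh => ?_⟩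
  · rw [← top_le_iff, ← hm]
    exact Submodule.span_mono (Set.range_subset_iff.mpr fun i => mem_pathSpan i)
  · exact exists_linearMap_eqOn_pathSpan hm ht hd fun i r hr =>
      smul_eq_of_mem_shortPaths_pow hp hgh (fun r hr => smul_mem_pathSpan i hr) hr

end Presenting

section Extension

variable {k : Type} [CommRing k] {Q : FinQuiver}

/-- A `k`-linear map commuting with the generators of `P_k(Ē)` is linear over `P_k(Ē)`. -/
def linearMapOfGenerators {A B : Type} [AddCommGroup A] [Module k A] [Module (GhostAlg k Q) A]
    [IsScalarTower k (GhostAlg k Q) A] [AddCommGroup B] [Module k B] [Module (GhostAlg k Q) B]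
    [IsScalarTower k (GhostAlg k Q) B] (f : A →ₗ[k] B)
    (hp : ∀ u x, f (p k Q u • x) = p k Q u • f x)
    (hgh : ∀ e x, f (gh k Q e • x) = gh k Q e • f x) : A →ₗ[GhostAlg k Q] B where
  __ := f
  map_smul' r x := by
    change f (r • x) = r • f x
    induction r using GhostAlg.induction generalizing x with
    | algebraMap a => rw [algebraMap_smul, algebraMap_smul, map_smul]
    | p u => exact hp u x
    | gh e => exact hgh e x
    | mul r s hr hs => rw [mul_smul, mul_smul, hr, hs]
    | add r s hr hs => rw [add_smul, add_smul, map_add, hr, hs]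

variable {V X : Type} [AddCommGroup V] [Module k V] [AddCommGroup X] [Module k X]
  [Module (GhostAlg k Q) X] [IsScalarTower k (GhostAlg k Q) X]

/-- The extension of the `P_k(Ē)`-module defined by `F` by the module `X` with cocycle `D`. -/
noncomputable def extensionFamily (F : GhostFamily Q (Module.End k V)) (D : Q.A → V →ₗ[k] X)
    (p_D : ∀ e x, p k Q (Q.tgt e) • D e x = D e x)
    (D_p : ∀ e x, D e (F.p (Q.src e) x) = D e x) : GhostFamily Q (Module.End k (V × X)) where
  p u := LinearMap.prodMap (F.p u) (Algebra.lsmul k k X (p k Q u))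
  gh e := LinearMap.prodMap (F.gh e) (Algebra.lsmul k k X (gh k Q e)) +
    LinearMap.inr k V X ∘ₗ D e ∘ₗ LinearMap.fst k V X
  p_mul_p u v := by
    refine LinearMap.ext fun x => Prod.ext ?_ ?_
    · refine (LinearMap.congr_fun (F.p_mul_p u v) x.1).trans ?_
      split_ifs <;> rfl
    · change p k Q u • p k Q v • x.2 = _
      rw [← mul_smul, p_mul_p, ite_smul, zero_smul]
      split_ifs <;> rfl
  sum_p := by
    refine LinearMap.ext fun x => Prod.ext ?_ ?_
    · rw [LinearMap.sum_apply, Prod.fst_sum]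
      change ∑ u, F.p u x.1 = x.1
      rw [← LinearMap.sum_apply, F.sum_p, Module.End.one_apply]
    · rw [LinearMap.sum_apply, Prod.snd_sum]
      change ∑ u, p k Q u • x.2 = x.2
      rw [← Finset.sum_smul, GhostAlg.sum_p, one_smul]
  tgt_mul_gh e := by
    refine LinearMap.ext fun x => Prod.ext ?_ ?_
    · change F.p (Q.tgt e) (F.gh e x.1 + 0) = F.gh e x.1 + 0
      rw [add_zero]
      exact LinearMap.congr_fun (F.tgt_mul_gh e) x.1
    · change p k Q (Q.tgt e) • (gh k Q e • x.2 + D e x.1) = gh k Q e • x.2 + D e x.1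
      rw [smul_add, p_D, ← mul_smul, GhostAlg.tgt_mul_gh]
  gh_mul_src e := by
    refine LinearMap.ext fun x => Prod.ext ?_ ?_
    · change F.gh e (F.p (Q.src e) x.1) + 0 = F.gh e x.1 + 0
      exact congrArg (· + 0) (LinearMap.congr_fun (F.gh_mul_src e) x.1)
    · change gh k Q e • p k Q (Q.src e) • x.2 + D e (F.p (Q.src e) x.1) =
        gh k Q e • x.2 + D e x.1
      rw [D_p, ← mul_smul, GhostAlg.gh_mul_src]

theorem exists_module_prod (F : GhostFamily Q (Module.End k V)) (D : Q.A → V →ₗ[k] X)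
    (p_D : ∀ e x, p k Q (Q.tgt e) • D e x = D e x)
    (D_p : ∀ e x, D e (F.p (Q.src e) x) = D e x) :
    ∃ _ : Module (GhostAlg k Q) (V × X), IsScalarTower k (GhostAlg k Q) (V × X) ∧
      (∀ u (x : V) (y : X), p k Q u • (x, y) = (F.p u x, p k Q u • y)) ∧
      ∀ e (x : V) (y : X), gh k Q e • (x, y) = (F.gh e x, gh k Q e • y + D e x) := by
  let h := (extensionFamily F D p_D D_p).lift k
  let _ : Module (GhostAlg k Q) (V × X) := Module.compHom _ h.toRingHom
  refine ⟨inferInstance, .of_algebraMap_smul fun a z => ?_, fun u x y => ?_, fun e x y => ?_⟩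
  · exact LinearMap.congr_fun (h.commutes a) z
  · exact LinearMap.congr_fun ((extensionFamily F D p_D D_p).lift_p u) (x, y)
  · refine (LinearMap.congr_fun ((extensionFamily F D p_D D_p).lift_gh e) (x, y)).trans ?_
    exact Prod.ext (add_zero _) rfl

variable {N : Type} [AddCommGroup N] [Module (GhostAlg k Q) N] [Module k N]
  [IsScalarTower k (GhostAlg k Q) N]

/-- The generators of `P_k(Ē)` acting on a subspace of a module, with the action of the ghost arrows
truncated by a projection onto the subspace. -/
noncomputable def truncatedFamily {V : Submodule k N} (hV : ∀ u, ∀ x ∈ V, p k Q u • x ∈ V)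
    (ρ : N →ₗ[k] V) : GhostFamily Q (Module.End k V) where
  p u := (Algebra.lsmul k k N (p k Q u)).restrict (hV u)
  gh e := (Algebra.lsmul k k N (p k Q (Q.tgt e))).restrict (hV (Q.tgt e)) ∘ₗ ρ ∘ₗ
    Algebra.lsmul k k N (gh k Q e) ∘ₗ V.subtype
  p_mul_p u v := by
    ext x
    change p k Q u • p k Q v • (x : N) = _
    rw [← mul_smul, p_mul_p, ite_smul, zero_smul]
    split_ifs <;> rfl
  sum_p := by
    ext x
    rw [LinearMap.sum_apply, AddSubmonoidClass.coe_finsetSum]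
    change ∑ u, p k Q u • (x : N) = x
    rw [← Finset.sum_smul, GhostAlg.sum_p, one_smul]
  tgt_mul_gh e := by
    ext x
    change p k Q (Q.tgt e) • p k Q (Q.tgt e) • (ρ (gh k Q e • (x : N)) : N) =
      p k Q (Q.tgt e) • (ρ (gh k Q e • (x : N)) : N)
    rw [← mul_smul, p_mul_p, if_pos rfl]
  gh_mul_src e := by
    ext x
    change p k Q (Q.tgt e) • (ρ (gh k Q e • p k Q (Q.src e) • (x : N)) : N) =
      p k Q (Q.tgt e) • (ρ (gh k Q e • (x : N)) : N)
    rw [← mul_smul, GhostAlg.gh_mul_src]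

end Extension

section Projective

variable {k : Type} [CommRing k] {Q : FinQuiver} {N : Type} [AddCommGroup N]
  [Module (GhostAlg k Q) N] {I : Type}

/-- The linear map from `⨁ᵢ P_k(Ē) p_{t i}` sending the `i`-th generator `p_{t i}` to `x i`,
provided that `p_{t i} • x i = x i`. -/
noncomputable def vertexLift [Fintype I] (t : I → Q.V) (x : I → N) :
    ((i : I) → pIdeal k Q (t i)) →ₗ[GhostAlg k Q] N :=
  ∑ i, LinearMap.toSpanSingleton (GhostAlg k Q) N (x i) ∘ₗ
    (pIdeal k Q (t i)).subtype ∘ₗ LinearMap.proj i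

variable [DecidableEq I] {t : I → Q.V}

theorem vertexLift_single [Fintype I] {x : I → N} {i : I} (hx : p k Q (t i) • x i = x i) :
    vertexLift t x (Pi.single i (pGen k (t i))) = x i := by
  rw [vertexLift, LinearMap.sum_apply, Fintype.sum_eq_single i]
  · refine (congrArg (fun y : pIdeal k Q (t i) => (y : GhostAlg k Q) • x i)
      (Pi.single_eq_same i _)).trans hx
  · intro j hj
    refine (congrArg (fun y : pIdeal k Q (t j) => (y : GhostAlg k Q) • x j)
      (Pi.single_eq_of_ne hj _)).trans ?_
    rw [ZeroMemClass.coe_zero, zero_smul]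

theorem p_smul_single_pGen (i : I) :
    p k Q (t i) • (Pi.single i (pGen k (t i)) : (i : I) → pIdeal k Q (t i)) =
      Pi.single i (pGen k (t i)) := by
  rw [← Pi.single_smul]
  exact congrArg _ (smul_pGen (pGen k (t i)))

theorem span_range_single_pGen [Finite I] :
    Submodule.span (GhostAlg k Q)
      (Set.range fun i : I => (Pi.single i (pGen k (t i)) : (i : I) → pIdeal k Q (t i))) = ⊤ := by
  have := Fintype.ofFinite I
  refine eq_top_iff.mpr fun y _ => ?_
  rw [← Finset.univ_sum_single y]
  refine Submodule.sum_mem _ fun i _ => ?_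
  rw [← smul_pGen (y i), Pi.single_smul]
  exact Submodule.smul_mem _ _ (Submodule.subset_span ⟨i, rfl⟩)

end Projective

section Lift

variable {k : Type} [Field k] {Q : FinQuiver} {N : Type} [AddCommGroup N]
  [Module (GhostAlg k Q) N] [Module k N] [IsScalarTower k (GhostAlg k Q) N]

theorem exists_projective_lift {α : Type} [Finite α] (v : α → Q.V) (W : α → Submodule k N)
    [∀ a, FiniteDimensional k (W a)] (hW : ∀ a, ∀ x ∈ W a, p k Q (v a) • x = x) :
    ∃ (I : Type) (_ : Finite I) (t : I → Q.V)
      (f : ((i : I) → pIdeal k Q (t i)) →ₗ[GhostAlg k Q] N)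
      (T : ∀ a, W a →ₗ[k] ((i : I) → pIdeal k Q (t i))),
      (∀ a w, f (T a w) = w) ∧ (∀ a w, p k Q (v a) • T a w = T a w) ∧
      Submodule.span (GhostAlg k Q) (⋃ a, Set.range (T a)) = ⊤ := by
  classical
  have := Fintype.ofFinite α
  let b (a : α) := Module.finBasis k (W a)
  let t (i : Σ a, Fin (Module.finrank k (W a))) : Q.V := v i.1
  let f := vertexLift (k := k) t fun i => (b i.1 i.2 : N)
  let T (a : α) : W a →ₗ[k] ((i : Σ a, Fin (Module.finrank k (W a))) → pIdeal k Q (t i)) :=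
    (b a).constr k fun j => Pi.single ⟨a, j⟩ (pGen k (v a))
  have T_basis (a j) : T a (b a j) = Pi.single ⟨a, j⟩ (pGen k (v a)) := (b a).constr_basis k _ j
  refine ⟨_, inferInstance, t, f, T, fun a w => ?_, fun a w => ?_, eq_top_iff.mpr ?_⟩
  · suffices (f.restrictScalars k) ∘ₗ T a = (W a).subtype from LinearMap.congr_fun this w
    refine (b a).ext fun j => ?_
    change f (T a (b a j)) = b a j
    rw [T_basis]
    exact vertexLift_single (t := t) (i := ⟨a, j⟩) (hW a _ (b a j).2)
  · suffices Algebra.lsmul k k _ (p k Q (v a)) ∘ₗ T a = T a from LinearMap.congr_fun this w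
    refine (b a).ext fun j => ?_
    change p k Q (v a) • T a (b a j) = T a (b a j)
    rw [T_basis]
    exact p_smul_single_pGen (t := t) ⟨a, j⟩
  · rw [← span_range_single_pGen (t := t)]
    refine Submodule.span_mono ?_
    rintro _ ⟨i, rfl⟩
    exact Set.mem_iUnion.mpr ⟨i.1, b i.1 i.2, T_basis i.1 i.2⟩

end Lift

section Extension

variable {k : Type} [CommRing k] {Q : FinQuiver} {N : Type} [AddCommGroup N]
  [Module (GhostAlg k Q) N] [Module k N]

theorem IsPresenting.bijective_of_linearMap {V : Submodule k N} (hV : IsPresenting (Q := Q) V)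
    {B : Type} [AddCommGroup B] [Module k B] [Module (GhostAlg k Q) B]
    [IsScalarTower k (GhostAlg k Q) B] (π : B →ₗ[GhostAlg k Q] N) (s : N →ₗ[k] B)
    (hs : ∀ x ∈ V, π (s x) = x)
    (hp : ∀ u, ∀ x ∈ V, p k Q u • s x = s (p k Q u • x))
    (hgh : ∀ e, ∀ x ∈ V, gh k Q e • x ∈ V → gh k Q e • s x = s (gh k Q e • x))
    (hspan : Submodule.span (GhostAlg k Q) (s '' V) = ⊤) : Function.Bijective π := by
  obtain ⟨g, hg⟩ := hV.exists_linearMap_eqOn B s hp hgh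
  have hleft : Function.LeftInverse π g := LinearMap.congr_fun <|
    LinearMap.ext_on (f := π ∘ₗ g) (g := LinearMap.id) hV.span_eq_top fun x hx =>
      (congrArg π (hg hx)).trans (hs x hx)
  have hsurj : Function.Surjective g := by
    rw [← LinearMap.range_eq_top, eq_top_iff, ← hspan, Submodule.span_le]
    rintro _ ⟨x, hx, rfl⟩
    exact ⟨x, hg hx⟩
  exact ⟨(hleft.rightInverse_of_surjective hsurj).injective, hleft.surjective⟩

variable [IsScalarTower k (GhostAlg k Q) N]
  {X : Type} [AddCommGroup X] [Module k X] [Module (GhostAlg k Q) X]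
  [IsScalarTower k (GhostAlg k Q) X]

theorem span_range_inl_eq_top {V : Type} [AddCommGroup V] [Module k V]
    [Module (GhostAlg k Q) (V × X)] [IsScalarTower k (GhostAlg k Q) (V × X)]
    {F : GhostFamily Q (Module.End k V)} {D : Q.A → V →ₗ[k] X}
    (p_smul : ∀ u (x : V) (y : X), p k Q u • (x, y) = (F.p u x, p k Q u • y))
    (gh_smul : ∀ e (x : V) (y : X), gh k Q e • (x, y) = (F.gh e x, gh k Q e • y + D e x))
    (hspan : Submodule.span (GhostAlg k Q) (⋃ e, Set.range (D e)) = ⊤) :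
    Submodule.span (GhostAlg k Q) (Set.range (LinearMap.inl k V X)) = ⊤ := by
  let i : X →ₗ[GhostAlg k Q] V × X := linearMapOfGenerators (LinearMap.inr k V X)
    (fun u y => by
      rw [LinearMap.inr_apply, LinearMap.inr_apply, p_smul, map_zero])
    (fun e y => by
      rw [LinearMap.inr_apply, LinearMap.inr_apply, gh_smul, map_zero, map_zero, add_zero])
  set S := Submodule.span (GhostAlg k Q) (Set.range (LinearMap.inl k V X))
  have inl_mem (x : V) : (x, (0 : X)) ∈ S := Submodule.subset_span ⟨x, rfl⟩
  have hS : ⊤ ≤ S.comap i := by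
    rw [← hspan, Submodule.span_le, Set.iUnion_subset_iff]
    rintro e _ ⟨x, rfl⟩
    have hD : i (D e x) = gh k Q e • (x, (0 : X)) - (F.gh e x, 0) := by
      rw [gh_smul, smul_zero, zero_add, Prod.mk_sub_mk, sub_self, sub_zero]
      rfl
    rw [SetLike.mem_coe, Submodule.mem_comap, hD]
    exact S.sub_mem (S.smul_mem _ (inl_mem x)) (inl_mem _)
  refine eq_top_iff.mpr fun z _ => ?_
  rw [← Prod.fst_add_snd z]
  exact S.add_mem (inl_mem z.1) (hS (Submodule.mem_top (x := z.2)))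

theorem exists_linearMap_prod {V : Submodule k N} [Module (GhostAlg k Q) (V × X)]
    [IsScalarTower k (GhostAlg k Q) (V × X)] {F : GhostFamily Q (Module.End k V)}
    {D : Q.A → V →ₗ[k] X}
    (p_smul : ∀ u (x : V) (y : X), p k Q u • (x, y) = (F.p u x, p k Q u • y))
    (gh_smul : ∀ e (x : V) (y : X), gh k Q e • (x, y) = (F.gh e x, gh k Q e • y + D e x))
    (hF : ∀ u x, (F.p u x : N) = p k Q u • (x : N)) (f : X →ₗ[GhostAlg k Q] N)
    (f_D : ∀ e x, f (D e x) = gh k Q e • (x : N) - F.gh e x) :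
    ∃ π : V × X →ₗ[GhostAlg k Q] N, ∀ z, π z = z.1 + f z.2 := by
  refine ⟨linearMapOfGenerators (V.subtype.coprod (f.restrictScalars k)) (fun u z => ?_)
    fun e z => ?_, fun z => rfl⟩
  · change ((p k Q u • (z.1, z.2)).1 : N) + f (p k Q u • (z.1, z.2)).2 = p k Q u • (z.1 + f z.2)
    rw [p_smul, hF, map_smul, smul_add]
  · change ((gh k Q e • (z.1, z.2)).1 : N) + f (gh k Q e • (z.1, z.2)).2 =
      gh k Q e • (z.1 + f z.2)
    rw [gh_smul, map_add, map_smul, f_D, smul_add]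
    abel

end Extension

section Projective

variable {k : Type} [Field k] {Q : FinQuiver} {N : Type} [AddCommGroup N]
  [Module (GhostAlg k Q) N] [Module k N] [IsScalarTower k (GhostAlg k Q) N]

theorem IsPresenting.bijective_add {V : Submodule k N} (hV : IsPresenting (Q := Q) V)
    {X : Type} [AddCommGroup X] [Module k X] [Module (GhostAlg k Q) X]
    [IsScalarTower k (GhostAlg k Q) X] (F : GhostFamily Q (Module.End k V))
    (hF : ∀ u x, (F.p u x : N) = p k Q u • (x : N)) (f : X →ₗ[GhostAlg k Q] N)
    (D : Q.A → V →ₗ[k] X) (p_D : ∀ e x, p k Q (Q.tgt e) • D e x = D e x)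
    (f_D : ∀ e x, f (D e x) = gh k Q e • (x : N) - F.gh e x)
    (D_eq_zero : ∀ e (x : V), gh k Q e • (x : N) ∈ V → D e x = 0)
    (hspan : Submodule.span (GhostAlg k Q) (⋃ e, Set.range (D e)) = ⊤) :
    Function.Bijective fun z : V × X => (z.1 : N) + f z.2 := by
  have D_p (e x) : D e (F.p (Q.src e) x) = D e x := by
    rw [← sub_eq_zero, ← map_sub]
    refine D_eq_zero e _ ?_
    rw [AddSubgroupClass.coe_sub, hF, smul_sub, ← mul_smul, GhostAlg.gh_mul_src, sub_self]
    exact V.zero_mem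
  obtain ⟨_, _, p_smul, gh_smul⟩ := exists_module_prod F D p_D D_p
  obtain ⟨π, hπ⟩ := exists_linearMap_prod p_smul gh_smul hF f f_D
  obtain ⟨ρ, hρ⟩ := V.subtype.exists_leftInverse_of_injective V.ker_subtype
  have ρ_coe (x : V) : ρ x = x := LinearMap.congr_fun hρ x
  rw [← funext hπ]
  refine hV.bijective_of_linearMap π (LinearMap.inl k V X ∘ₗ ρ) (fun x hx => ?_) (fun u x hx => ?_)
    (fun e x hx h => ?_) ?_
  · lift x to V using hx
    refine (hπ _).trans ?_
    rw [LinearMap.comp_apply, ρ_coe, LinearMap.inl_apply, map_zero, add_zero]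
  · lift x to V using hx
    change p k Q u • (ρ x, (0 : X)) = (ρ (p k Q u • (x : N)), 0)
    rw [← hF, ρ_coe, ρ_coe, p_smul, smul_zero]
  · lift x to V using hx
    have hF_gh : (F.gh e x : N) = gh k Q e • (x : N) := by
      rw [eq_comm, ← sub_eq_zero, ← f_D, D_eq_zero e x h, map_zero]
    change gh k Q e • (ρ x, (0 : X)) = (ρ (gh k Q e • (x : N)), 0)
    rw [← hF_gh, ρ_coe, ρ_coe, gh_smul, smul_zero, zero_add, D_eq_zero e x h]
  · rw [← span_range_inl_eq_top p_smul gh_smul hspan, Set.image_eq_range]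
    exact congrArg (fun s => Submodule.span _ (Set.range s))
      (funext fun x => congrArg (LinearMap.inl k V X) (ρ_coe x))

theorem IsPresenting.exists_projective {V : Submodule k N} [FiniteDimensional k V]
    (hV : IsPresenting (Q := Q) V) :
    ∃ (I : Type) (_ : Finite I) (t : I → Q.V)
      (f : ((i : I) → pIdeal k Q (t i)) →ₗ[GhostAlg k Q] N),
      Function.Injective f ∧ FiniteDimensional k (N ⧸ LinearMap.range f) := by
  obtain ⟨ρ, hρ⟩ := V.subtype.exists_leftInverse_of_injective V.ker_subtype
  let F := truncatedFamily hV.p_smul_mem ρ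
  let δ (e : Q.A) : V →ₗ[k] N :=
    Algebra.lsmul k k N (gh k Q e) ∘ₗ V.subtype - V.subtype ∘ₗ F.gh e
  have p_δ (e) (x) (hx : x ∈ LinearMap.range (δ e)) : p k Q (Q.tgt e) • x = x := by
    obtain ⟨x, rfl⟩ := hx
    have hF : p k Q (Q.tgt e) • (F.gh e x : N) = F.gh e x :=
      congrArg Subtype.val (LinearMap.congr_fun (F.tgt_mul_gh e) x)
    change p k Q (Q.tgt e) • (gh k Q e • (x : N) - F.gh e x) = gh k Q e • (x : N) - F.gh e x
    rw [smul_sub, hF, ← mul_smul, GhostAlg.tgt_mul_gh]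
  have δ_eq_zero (e) (x : V) (hx : gh k Q e • (x : N) ∈ V) : δ e x = 0 := by
    have hρx : ρ (gh k Q e • (x : N)) = ⟨gh k Q e • (x : N), hx⟩ := LinearMap.congr_fun hρ ⟨_, hx⟩
    change gh k Q e • (x : N) - p k Q (Q.tgt e) • (ρ (gh k Q e • (x : N)) : N) = 0
    rw [hρx, ← mul_smul, GhostAlg.tgt_mul_gh, sub_self]
  obtain ⟨I, _, t, f, T, f_T, p_T, span_T⟩ :=
    exists_projective_lift Q.tgt (fun e => LinearMap.range (δ e)) p_δ
  have hbij := hV.bijective_add F (fun _ _ => rfl) f (fun e => T e ∘ₗ (δ e).rangeRestrict)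
    (fun e x => p_T e _) (fun e x => f_T e _)
    (fun e x hx => (congrArg (T e) (Subtype.ext (δ_eq_zero e x hx))).trans (map_zero _)) (by
      rw [← span_T]
      exact congrArg _ (Set.iUnion_congr fun e =>
        (LinearMap.surjective_rangeRestrict (δ e)).range_comp (T e)))
  refine ⟨I, inferInstance, t, f, fun y z h => ?_, ?_⟩
  · exact congrArg Prod.snd (@hbij.1 (0, y) (0, z) (congrArg ((0 : N) + ·) h))
  · refine Module.Finite.of_surjective
      ((LinearMap.range f).mkQ.restrictScalars k ∘ₗ V.subtype) fun n => ?_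
    obtain ⟨n, rfl⟩ := (LinearMap.range f).mkQ_surjective n
    obtain ⟨⟨x, y⟩, rfl⟩ := hbij.2 n
    refine ⟨x, ((Submodule.Quotient.eq _).mpr ?_).symm⟩
    exact ⟨y, (add_sub_cancel_left _ _).symm⟩

end Projective

section ProjectiveSubmodule

variable {k : Type} [CommRing k] {Q : FinQuiver}

instance (v : Q.V) : Module.Finite (GhostAlg k Q) (pIdeal k Q v) :=
  Module.Finite.range (rightMul (GhostAlg k Q) (p k Q v))

instance (v : Q.V) : Module.Projective (GhostAlg k Q) (pIdeal k Q v) :=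
  Module.Projective.of_split (pIdeal k Q v).subtype
    (rightMul (GhostAlg k Q) (p k Q v)).rangeRestrict
    (LinearMap.ext fun x => Subtype.ext (mem_pIdeal.mp x.2))

instance {I : Type} [Finite I] (t : I → Q.V) :
    Module.Projective (GhostAlg k Q) ((i : I) → pIdeal k Q (t i)) := by
  classical
  have := Fintype.ofFinite I
  exact Module.Projective.of_equiv DFinsupp.linearEquivFunOnFintype

end ProjectiveSubmodule

section FinitePresentation

variable {k : Type} [Field k] {Q : FinQuiver} {M : Type} [AddCommGroup M] [Module (Leavitt k Q) M]

variable (k Q M) in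
theorem exists_projective_of_finitePresentation [Module.FinitePresentation (Leavitt k Q) M] :
    ∃ (n : ℕ) (K : Submodule (GhostAlg k Q) (Fin n → GhostAlg k Q)) (I : Type) (_ : Finite I)
      (t : I → Q.V)
      (f : ((i : I) → pIdeal k Q (t i)) →ₗ[GhostAlg k Q] (Fin n → GhostAlg k Q) ⧸ K),
      Nonempty (M ≃ₗ[Leavitt k Q]
        TensorPhi _ _ (ghostToLeavitt k Q) ((Fin n → GhostAlg k Q) ⧸ K)) ∧
      Function.Injective f ∧
      FiniteDimensional k (((Fin n → GhostAlg k Q) ⧸ K) ⧸ LinearMap.range f) := by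
  obtain ⟨n, K, hK, e⟩ := exists_tensorPhi_equiv_of_finitePresentation (k := k) (Q := Q) (M := M)
  have : Module.FinitePresentation (GhostAlg k Q) ((Fin n → GhostAlg k Q) ⧸ K) :=
    Module.finitePresentation_of_surjective K.mkQ K.mkQ_surjective (by rwa [K.ker_mkQ])
  obtain ⟨V, hV_fg, hV⟩ := exists_isPresenting k Q ((Fin n → GhostAlg k Q) ⧸ K)
  have : FiniteDimensional k V := Module.Finite.iff_fg.mpr hV_fg
  obtain ⟨I, hI, t, f, hf⟩ := hV.exists_projective
  exact ⟨n, K, I, hI, t, f, e, hf⟩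

theorem isFiniteLength_of_finiteDimensional {A N : Type} [Ring A] [Algebra k A] [AddCommGroup N]
    [Module A N] [Module k N] [IsScalarTower k A N] [FiniteDimensional k N] :
    IsFiniteLength A N :=
  isFiniteLength_iff_isNoetherian_isArtinian.mpr
    ⟨isNoetherian_of_tower k inferInstance, isArtinian_of_tower k inferInstance⟩

theorem exists_projective_isFiniteLength_quotient [Module.FinitePresentation (Leavitt k Q) M] :
    ∃ P : Submodule (Leavitt k Q) M, Module.Finite (Leavitt k Q) P ∧
      Module.Projective (Leavitt k Q) P ∧ IsFiniteLength (Leavitt k Q) (M ⧸ P) := by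
  obtain ⟨n, K, I, _, t, f, ⟨e⟩, hf, _⟩ := exists_projective_of_finitePresentation k Q M
  let F := e.symm.toLinearMap ∘ₗ tmap _ _ (ghostToLeavitt k Q) f
  have hF : Function.Injective F := e.symm.injective.comp (rightFlat _ _ f hf)
  let eF := LinearEquiv.ofInjective F hF
  refine ⟨LinearMap.range F, Module.Finite.equiv eF, Module.Projective.of_equiv eF, ?_⟩
  let q := tmap _ _ (ghostToLeavitt k Q) (LinearMap.range f).mkQ
  have hq : Function.Exact (tmap _ _ (ghostToLeavitt k Q) f) q :=
    TensorPhi.tmap_exact (LinearMap.exact_map_mkQ_range f) (Submodule.mkQ_surjective _)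
  have range_F : LinearMap.range F = LinearMap.ker (q ∘ₗ e.toLinearMap) := by
    rw [LinearMap.range_comp, LinearMap.ker_comp, hq.linearMap_ker_eq]
    exact Submodule.map_equiv_eq_comap_symm e.symm _
  refine ((Submodule.quotEquivOfEq _ _ range_F).trans
    ((q ∘ₗ e.toLinearMap).quotKerEquivOfSurjective ?_)).symm.isFiniteLength
    (isFiniteLength_tensorPhi (isFiniteLength_of_finiteDimensional (k := k)))
  exact (TensorPhi.tmap_surjective (Submodule.mkQ_surjective _)).comp e.surjective

end FinitePresentation

section NotArtinian

theorem not_isArtinian_range_rightMul {R Y : Type} [Ring R] [AddCommGroup Y] [Module R Y]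
    {p d : R} {y : ℕ → Y} (hp : ∀ n, p • y n = y n) (hd : ∀ n, d • y (n + 1) = y n)
    (hd_zero : d • y 0 = 0) (hy : y 0 ≠ 0) :
    ¬ IsArtinian R (LinearMap.range (rightMul R p)) := by
  intro h
  let A (n : ℕ) : Submodule R (LinearMap.range (rightMul R p)) :=
    ⨅ i ≤ n, LinearMap.ker (LinearMap.toSpanSingleton R Y (y i) ∘ₗ Submodule.subtype _)
  have mem_A {n x} : x ∈ A n ↔ ∀ i ≤ n, (x : R) • y i = 0 := by
    simp only [A, Submodule.mem_iInf, LinearMap.mem_ker, LinearMap.comp_apply,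
      Submodule.subtype_apply, LinearMap.toSpanSingleton_apply]
  have pow_smul_zero (n : ℕ) : d ^ n • y n = y 0 := by
    induction n with
    | zero => rw [pow_zero, one_smul]
    | succ n ih => rw [pow_succ, mul_smul, hd, ih]
  refine not_strictAnti_of_wellFoundedLT A (strictAnti_nat_of_succ_lt fun n => ?_)
  refine lt_of_le_of_ne (fun x hx => mem_A.mpr fun i hi => mem_A.mp hx i (by lia)) fun heq => hy ?_
  let z : LinearMap.range (rightMul R p) := ⟨d ^ (n + 1) * p, _, rfl⟩
  have hz : z ∈ A n := mem_A.mpr fun i hi => by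
    have hj : n + 1 = (n - i) + (1 + i) := by lia
    change (d ^ (n + 1) * p) • y i = 0
    rw [mul_smul, hp, hj, pow_add, pow_add, pow_one, mul_smul, mul_smul, pow_smul_zero, hd_zero,
      smul_zero]
  have := mem_A.mp (heq ▸ hz) (n + 1) le_rfl
  rwa [mul_smul, hp, pow_smul_zero] at this

theorem isArtinian_range_rightMul_of_mul_eq {R : Type} [Ring R] {p q a b : R}
    [IsArtinian R (LinearMap.range (rightMul R p))] (hab : a * b = q) (ha : a * p = a)
    (hb : b * q = b) : IsArtinian R (LinearMap.range (rightMul R q)) := by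
  let f : LinearMap.range (rightMul R p) →ₗ[R] LinearMap.range (rightMul R q) :=
    (rightMul R b ∘ₗ Submodule.subtype _).codRestrict _ fun x => ⟨x * b, by
      change x * b * q = x * b
      rw [mul_assoc, hb]⟩
  refine isArtinian_of_surjective _ f ?_
  rintro ⟨_, y, rfl⟩
  refine ⟨⟨y * a, y * a, (mul_assoc _ _ _).trans (congrArg _ ha)⟩, Subtype.ext ?_⟩
  exact (mul_assoc _ _ _).trans (congrArg _ hab)

variable (k : Type) [CommRing k] {Q : FinQuiver}

/-- The germ of the function `μ ↦ g |μ|` on the paths starting at `u`. -/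
noncomputable def lengthGerm (u : Q.V) (g : ℕ → k) : BoundaryGerm k Q k :=
  (boundaryNull k Q k).mkQ fun w => if pathStart w.1 w.2 = u then g w.1.length else 0

variable {k}

theorem lengthGerm_sub (u : Q.V) (g h : ℕ → k) :
    lengthGerm k u g - lengthGerm k u h = lengthGerm k u (g - h) := by
  rw [lengthGerm, lengthGerm, ← map_sub]
  refine congrArg _ (funext fun w => ?_)
  rw [Pi.sub_apply, ite_sub_ite, sub_zero]
  rfl

theorem p_smul_lengthGerm (u : Q.V) (g : ℕ → k) :
    Leavitt.p k Q u • lengthGerm k u g = lengthGerm k u g := by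
  refine (BoundaryGerm.p_smul u _).trans (congrArg _ (funext fun w => ?_))
  simp +contextual [BoundaryGerm.pFun, eq_comm]

theorem gh_smul_lengthGerm (e : Q.A) (g : ℕ → k) :
    Leavitt.gh k Q e • lengthGerm k (Q.src e) g = lengthGerm k (Q.tgt e) fun n => g (n + 1) := by
  refine (BoundaryGerm.gh_smul e _).trans (congrArg _ (funext fun w => ?_))
  simp [BoundaryGerm.ghFun]

theorem lengthGerm_one_ne_zero [Nontrivial k] (u : Q.V) : lengthGerm k u 1 ≠ 0 := by
  intro h
  refine frequently_pathStart_eq u ?_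
  filter_upwards [mem_boundaryNull.mp ((Submodule.Quotient.mk_eq_zero _).mp h)] with w hw hu
  rw [if_pos hu] at hw
  exact one_ne_zero hw

theorem exists_smul_lengthGerm {v u : Q.V}
    (h : Relation.TransGen (fun v u => ∃ e, Q.src e = u ∧ Q.tgt e = v) v u) :
    ∃ (c : Leavitt k Q) (l : ℕ), 0 < l ∧
      ∀ g : ℕ → k, c • lengthGerm k u g = lengthGerm k v fun n => g (n + l) := by
  induction h with
  | single h =>
    obtain ⟨e, rfl, rfl⟩ := h
    exact ⟨Leavitt.gh k Q e, 1, one_pos, gh_smul_lengthGerm e⟩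
  | tail _ h ih =>
    obtain ⟨c, l, _, hc⟩ := ih
    obtain ⟨e, rfl, rfl⟩ := h
    refine ⟨c * Leavitt.gh k Q e, l + 1, l.succ_pos, fun g => ?_⟩
    rw [mul_smul, gh_smul_lengthGerm, hc]
    rfl

theorem not_isArtinian_pIdealL [Nontrivial k] {u : Q.V}
    (h : Relation.TransGen (fun v u => ∃ e, Q.src e = u ∧ Q.tgt e = v) u u) :
    ¬ IsArtinian (Leavitt k Q) (pIdealL k Q u) := by
  obtain ⟨c, l, hl, hc⟩ := exists_smul_lengthGerm (k := k) h
  -- `c` shifts `m / l` by one, so `c - 1` lowers the binomial coefficients by Pascal's rule.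
  refine not_isArtinian_range_rightMul (d := c - 1)
    (y := fun n => lengthGerm k u fun m => ((m / l).choose n : k))
    (fun n => p_smul_lengthGerm u _) (fun n => ?_) ?_ ?_
  · rw [sub_smul, one_smul, hc, lengthGerm_sub]
    refine congrArg _ (funext fun m => ?_)
    rw [Pi.sub_apply, Nat.add_div_right m hl, Nat.choose_succ_succ,
      Nat.cast_add, add_sub_cancel_right]
  · simp only [Nat.choose_zero_right, sub_smul, one_smul, hc, sub_self]
  · simp only [Nat.choose_zero_right, Nat.cast_one]
    exact lengthGerm_one_ne_zero u

end NotArtinian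

section FiniteDimensional

variable {k : Type} [CommRing k] {Q : FinQuiver}

theorem isArtinian_pIdealL_tgt (e : Q.A) [IsArtinian (Leavitt k Q) (pIdealL k Q (Q.src e))] :
    IsArtinian (Leavitt k Q) (pIdealL k Q (Q.tgt e)) := by
  have : IsArtinian (Leavitt k Q)
    (LinearMap.range (rightMul (Leavitt k Q) (Leavitt.p k Q (Q.src e)))) := ‹_›
  refine isArtinian_range_rightMul_of_mul_eq (p := Leavitt.p k Q (Q.src e))
    (a := Leavitt.gh k Q e) (b := Leavitt.ed k Q e) ?_ ?_ (Leavitt.ed_mul_tgt k Q e)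
  · rw [Leavitt.gh_mul_ed, if_pos rfl]
  · rw [← ghostToLeavitt_gh, ← ghostToLeavitt_p, ← map_mul, gh_mul_src]

instance (v : Q.V) : Module.Finite k (CokerNu k Q v) := by
  refine Module.Finite.of_surjective (LinearMap.toSpanSingleton k _ (cokerGen k v)) fun x => ?_
  obtain ⟨r, rfl⟩ := exists_smul_cokerGen x
  obtain ⟨a, ha⟩ := (isVertexVector_cokerGen k v).exists_smul_eq r
  exact ⟨a, ha.symm⟩

theorem finite_pIdeal {u : Q.V}
    (h : ∀ e, Q.src e = u → Module.Finite k (pIdeal k Q (Q.tgt e))) :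
    Module.Finite k (pIdeal k Q u) := by
  have (e : {e : Q.A // Q.src e = u}) : Module.Finite k (pIdeal k Q (Q.tgt e)) := h e e.2
  let N := (LinearMap.range (nu k Q u)).restrictScalars k
  have : Module.Finite k N :=
    Module.Finite.range ((nu k Q u).restrictScalars k)
  have : Module.Finite k (pIdeal k Q u ⧸ N) :=
    inferInstanceAs (Module.Finite k (CokerNu k Q u))
  exact Module.Finite.of_submodule_quotient N

theorem finite_pIdeal_of_isArtinian [Nontrivial k] (u : Q.V)
    (hu : IsArtinian (Leavitt k Q) (pIdealL k Q u)) : Module.Finite k (pIdeal k Q u) := by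
  let r (v u : Q.V) : Prop :=
    IsArtinian (Leavitt k Q) (pIdealL k Q u) ∧ ∃ e, Q.src e = u ∧ Q.tgt e = v
  -- No cycle can be reached from `u`, so induction along the arrows terminates.
  have : Std.Irrefl (Relation.TransGen r) := ⟨fun v hv => by
    obtain ⟨_, _, hv_artinian, _⟩ := Relation.TransGen.tail'_iff.mp hv
    exact not_isArtinian_pIdealL (Relation.TransGen.mono (fun _ _ h => h.2) v v hv) hv_artinian⟩
  induction u using (Finite.wellFounded_of_trans_of_irrefl (Relation.TransGen r)).induction with
  | _ u ih =>
    refine finite_pIdeal fun e he => ih _ (.single ⟨hu, e, he, rfl⟩) ?_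
    subst he
    exact isArtinian_pIdealL_tgt e

end FiniteDimensional

section Artinian

variable {k : Type} [Field k] {Q : FinQuiver}

theorem isArtinian_pIdealL (u : Q.V)
    [IsArtinian (Leavitt k Q) (TensorPhi _ _ (ghostToLeavitt k Q) (pIdeal k Q u))] :
    IsArtinian (Leavitt k Q) (pIdealL k Q u) := by
  let f : pIdeal k Q u →ₛₗ[ghostToLeavitt k Q] pIdealL k Q u :=
    { toFun x := ⟨ghostToLeavitt k Q x, ghostToLeavitt k Q x, by
        change ghostToLeavitt k Q x * Leavitt.p k Q u = _
        rw [← ghostToLeavitt_p, ← map_mul, mem_pIdeal.mp x.2]⟩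
      map_add' x y := Subtype.ext (map_add _ _ _)
      map_smul' r x := Subtype.ext (map_mul _ _ _) }
  refine isArtinian_of_surjective _ (TensorPhi.lift f) ?_
  rintro ⟨_, y, rfl⟩
  refine ⟨y • TensorPhi.ι _ (pIdeal k Q u) (pGen k u), ?_⟩
  rw [map_smul, TensorPhi.lift_ι]
  exact Subtype.ext (congrArg (y * ·) (ghostToLeavitt_p u))

theorem finDimOver {R N : Type} [Ring R] [Algebra k R] [AddCommGroup N] [Module R N] [Module k N]
    [IsScalarTower k R N] [FiniteDimensional k N] : FinDimOver k R ⟨N⟩ := by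
  have h : Module.compHom N (algebraMap k R) = ‹Module k N› :=
    Module.ext' _ _ fun a x => algebraMap_smul R a x
  change @FiniteDimensional k N _ _ (Module.compHom N (algebraMap k R))
  rwa [h]

theorem exists_finDimOver_of_isArtinian {M : Type} [AddCommGroup M] [Module (Leavitt k Q) M]
    [Module.FinitePresentation (Leavitt k Q) M] [IsArtinian (Leavitt k Q) M] :
    ∃ X : ModuleOver (GhostAlg k Q), FinDimOver k (GhostAlg k Q) X ∧
      Nonempty (M ≃ₗ[Leavitt k Q] TensorPhi _ _ (ghostToLeavitt k Q) X.carrier) := by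
  classical
  obtain ⟨n, K, I, _, t, f, ⟨e⟩, hf, _⟩ := exists_projective_of_finitePresentation k Q M
  have : IsArtinian (Leavitt k Q)
      (TensorPhi _ _ (ghostToLeavitt k Q) ((Fin n → GhostAlg k Q) ⧸ K)) :=
    isArtinian_of_linearEquiv e
  have (i : I) : FiniteDimensional k (pIdeal k Q (t i)) := by
    have := isArtinian_of_injective _ <| rightFlat _ _
      (f ∘ₗ LinearMap.single _ (fun i => pIdeal k Q (t i)) i)
      (hf.comp <| Pi.single_injective (M := fun i => pIdeal k Q (t i)) i)
    exact finite_pIdeal_of_isArtinian _ (isArtinian_pIdealL (t i))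
  have : FiniteDimensional k ((LinearMap.range f).restrictScalars k) :=
    Module.Finite.range (f.restrictScalars k)
  have : FiniteDimensional k (_ ⧸ (LinearMap.range f).restrictScalars k) := ‹_›
  have : FiniteDimensional k ((Fin n → GhostAlg k Q) ⧸ K) :=
    Module.Finite.of_submodule_quotient ((LinearMap.range f).restrictScalars k)
  exact ⟨⟨_⟩, finDimOver, ⟨e⟩⟩

end Artinian

end LPA

open LPA in
theorem statement_16_general (k : Type) [Field k] (Q : FinQuiver) :
    (∀ (N : Type) [AddCommGroup N] [Module (PathAlg k Q.rev) N]
        (ℓ r : ℕ) (c : Fin (ℓ + 1) → Submodule (PathAlg k Q.rev) N),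
        IsCompSeries ℓ c →
        (∃ T : Finset (Fin ℓ), T.card = r ∧ ∀ i : Fin ℓ,
          (i ∈ T ↔ ∃ v : Q.V, ¬ IsSink Q v ∧
            Nonempty (SeriesFactor c i ≃ₗ[PathAlg k Q.rev] CokerNu k Q v))) →
        ∃ c' : Fin (ℓ - r + 1) → Submodule (Leavitt k Q)
          (TensorPhi (PathAlg k Q.rev) (Leavitt k Q) (revToLeavitt k Q).toRingHom N),
          IsCompSeries (ℓ - r) c') ∧
    (∀ (M : Type) [AddCommGroup M] [Module (Leavitt k Q) M],
        Module.FinitePresentation (Leavitt k Q) M →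
        ∃ P : Submodule (Leavitt k Q) M, Module.Finite (Leavitt k Q) ↥P ∧
          Module.Projective (Leavitt k Q) ↥P ∧ IsFiniteLength (Leavitt k Q) (M ⧸ P)) ∧
    (∀ (M : Type) [AddCommGroup M] [Module (Leavitt k Q) M],
        Module.FinitePresentation (Leavitt k Q) M → IsArtinian (Leavitt k Q) M →
        ∃ X : ModuleOver (PathAlg k Q.rev), FinDimOver k (PathAlg k Q.rev) X ∧
          Nonempty (M ≃ₗ[Leavitt k Q]
            TensorPhi (PathAlg k Q.rev) (Leavitt k Q) (revToLeavitt k Q).toRingHom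
              X.carrier)) := by
  refine ⟨?_, ?_, ?_⟩
  · rintro N _ _ ℓ _ c hc ⟨T, rfl, hT⟩
    exact exists_isCompSeries (length_tensorPhi_of_isCompSeries hc hT)
  · intro M _ _ _
    exact exists_projective_isFiniteLength_quotient
  · intro M _ _ _ _
    exact exists_finDimOver_of_isArtinian

open LPA in
/-- Let `R = P_k(Ē)` and `L = L_k(E)`.
(1) If `N` is a finite-dimensional left `R`-module with a composition series of length `ℓ`,
exactly `r` of whose factors are isomorphic to modules in `{coker ν_i | i not a sink}`, then
`L ⊗_R N` has finite length exactly `ℓ - r` (witnessed by a composition series).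
(2) Every finitely presented left `L`-module `M` contains a finitely generated projective
`L`-submodule `P` with `M/P` of finite length.
(3) Every finitely presented left `L`-module of finite length is isomorphic to `L ⊗_R N` for
some finite-dimensional left `R`-module `N`. -/
theorem statement_16 (k : Type) [Field k] (Q : FinQuiver) :
    (∀ (N : Type) [AddCommGroup N] [Module (PathAlg k Q.rev) N] [Module k N]
        [IsScalarTower k (PathAlg k Q.rev) N] [FiniteDimensional k N]
        (ℓ r : ℕ) (c : Fin (ℓ + 1) → Submodule (PathAlg k Q.rev) N),
        IsCompSeries ℓ c →
        (∃ T : Finset (Fin ℓ), T.card = r ∧ ∀ i : Fin ℓ,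
          (i ∈ T ↔ ∃ v : Q.V, ¬ IsSink Q v ∧
            Nonempty (SeriesFactor c i ≃ₗ[PathAlg k Q.rev] CokerNu k Q v))) →
        ∃ c' : Fin (ℓ - r + 1) → Submodule (Leavitt k Q)
          (TensorPhi (PathAlg k Q.rev) (Leavitt k Q) (revToLeavitt k Q).toRingHom N),
          IsCompSeries (ℓ - r) c') ∧
    (∀ (M : Type) [AddCommGroup M] [Module (Leavitt k Q) M],
        Module.FinitePresentation (Leavitt k Q) M →
        ∃ P : Submodule (Leavitt k Q) M, Module.Finite (Leavitt k Q) ↥P ∧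
          Module.Projective (Leavitt k Q) ↥P ∧ IsFiniteLength (Leavitt k Q) (M ⧸ P)) ∧
    (∀ (M : Type) [AddCommGroup M] [Module (Leavitt k Q) M],
        Module.FinitePresentation (Leavitt k Q) M → IsFiniteLength (Leavitt k Q) M →
        ∃ X : ModuleOver (PathAlg k Q.rev), FinDimOver k (PathAlg k Q.rev) X ∧
          Nonempty (M ≃ₗ[Leavitt k Q]
            TensorPhi (PathAlg k Q.rev) (Leavitt k Q) (revToLeavitt k Q).toRingHom
              X.carrier)) := by
  obtain ⟨h₁, h₂, h₃⟩ := statement_16_general k Q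
  exact ⟨fun N _ _ _ _ _ => h₁ N, h₂, fun M _ _ hM hM_length =>
    h₃ M hM (isFiniteLength_iff_isNoetherian_isArtinian.mp hM_length).2⟩
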